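/- arXiv:2305.14636 — 7 statements merged into one kernel-verified Lean document; each statement's English description precedes it below -/
import Mathlib

section
/- Let G be a connected finite simple graph on n ≥ 3 vertices with adjacency matrix A. Let M be a real symmetric matrix with nonnegative entries, indexed by the vertex set of G, which is irreducible and satisfies M_{xy} = 0 whenever x = y or x is adjacent to y. If the matrix B = M + A is not equal to J − I (where J is the all-ones matrix and I the identity), then B has at least three distinct eigenvalues. -/
/-- `θ` is an eigenvalue of the real matrix `M`. -/
def IsEigenval {n : Type*} [Fintype n] (M : Matrix n n ℝ) (θ : ℝ) : Prop :=
  ∃ v : n → ℝ, v ≠ 0 ∧ M.mulVec v = θ • v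

theorem aux_rank {V : Type*} [Fintype V] [DecidableEq V] (N : Matrix V V ℝ) (c d : ℝ)
    (hc : 0 < c) (hd : 0 < d) (hs : ∀ x y, N x y = N y x) (hpos : ∀ x y, 0 < N x y)
    (hdiag : ∀ x, N x x = d) (hsq : ∀ x y, ∑ z, N x z * N z y = c * N x y) (y z : V) :
    N y z = d := by
  obtain ⟨x₀, -, hx₀⟩ := Finset.exists_min_image Finset.univ (fun x => N x z / N x y) ⟨y, Finset.mem_univ y⟩
  set s := N x₀ z / N x₀ y with hsdef
  have hspos : 0 < s := div_pos (hpos _ _) (hpos _ _)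
  have hw : ∀ x, 0 ≤ N x z - s * N x y := by
    intro x
    have h := hx₀ x (Finset.mem_univ x)
    rw [le_div_iff₀ (hpos x y)] at h
    linarith
  have hw0 : N x₀ z - s * N x₀ y = 0 := by
    rw [hsdef, div_mul_cancel₀ _ (hpos x₀ y).ne', sub_self]
  have hsum : ∑ x, N x₀ x * (N x z - s * N x y) = 0 := by
    have : ∑ x, N x₀ x * (N x z - s * N x y) = ∑ x, N x₀ x * N x z - s * ∑ x, N x₀ x * N x y := by
      rw [Finset.mul_sum, ← Finset.sum_sub_distrib]
      exact Finset.sum_congr rfl fun x _ => by ring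
    rw [this, hsq, hsq]
    linear_combination c * hw0
  have hall : ∀ x, N x z = s * N x y := by
    intro x
    have h := (Finset.sum_eq_zero_iff_of_nonneg
      (fun x _ => mul_nonneg (hpos x₀ x).le (hw x))).1 hsum x (Finset.mem_univ x)
    rcases mul_eq_zero.1 h with h | h
    · exact absurd h (hpos _ _).ne'
    · linarith
  have h1 := hall z
  have h2 := hall y
  rw [hdiag] at h1 h2
  rw [hs z y, h2] at h1
  have hs1 : s = 1 := by
    have : d * ((s - 1) * (s + 1)) = 0 := by linear_combination -h1
    rcases mul_eq_zero.1 this with h | h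
    · exact absurd h hd.ne'
    · rcases mul_eq_zero.1 h with h | h <;> linarith
  rw [h2, hs1, one_mul]

theorem aux_quad {V : Type*} [Fintype V] [DecidableEq V] (B : Matrix V V ℝ) (hB : B.IsHermitian)
    (a b : ℝ) (h : ∀ i, hB.eigenvalues i = a ∨ hB.eigenvalues i = b) :
    (B - a • 1) * (B - b • 1) = 0 := by
  have hl : Matrix.toEuclideanLin ((B - a • 1) * (B - b • 1)) = 0 := by
    apply hB.eigenvectorBasis.toBasis.ext
    intro i
    have he := hB.mulVec_eigenvectorBasis i
    apply (WithLp.ofLp_injective 2)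
    simp only [OrthonormalBasis.coe_toBasis, Matrix.ofLp_toEuclideanLin_apply, LinearMap.zero_apply, WithLp.ofLp_zero]
    rw [← Matrix.mulVec_mulVec]
    simp only [Matrix.sub_mulVec, Matrix.smul_mulVec, Matrix.one_mulVec, he, ← sub_smul,
      Matrix.mulVec_smul, smul_smul]
    rcases h i with h | h <;> simp [h]
  exact (LinearEquiv.map_eq_zero_iff _).1 hl

theorem stmt0 {V : Type*} [Fintype V] [DecidableEq V] (G : SimpleGraph V) [DecidableRel G.Adj]
    (hconn : G.Connected) (hcard : 3 ≤ Fintype.card V)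
    (M : Matrix V V ℝ) (hsymm : M.IsSymm)
    (hnonneg : ∀ x y : V, 0 ≤ M x y)
    (hirr : ∀ x y : V, ∃ m : ℕ, 0 < m ∧ 0 < (M ^ m) x y)
    (hzero : ∀ x y : V, (x = y ∨ G.Adj x y) → M x y = 0)
    (hne : M + G.adjMatrix ℝ ≠ Matrix.of (fun _ _ => (1 : ℝ)) - 1) :
    ∃ a b c : ℝ, a ≠ b ∧ a ≠ c ∧ b ≠ c ∧
      IsEigenval (M + G.adjMatrix ℝ) a ∧ IsEigenval (M + G.adjMatrix ℝ) b ∧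
      IsEigenval (M + G.adjMatrix ℝ) c := by
  by_contra hcon
  have hBs : ∀ x y, (M + G.adjMatrix ℝ) x y = (M + G.adjMatrix ℝ) y x := by
    intro x y
    simp [Matrix.add_apply, hsymm.apply x y, G.adj_comm]
  have hB0 : ∀ x y, 0 ≤ (M + G.adjMatrix ℝ) x y := by
    intro x y
    have := hnonneg x y
    simp only [Matrix.add_apply, SimpleGraph.adjMatrix_apply]
    split_ifs <;> linarith
  have hBd : ∀ x, (M + G.adjMatrix ℝ) x x = 0 := by
    intro x
    simp [hzero x x (Or.inl rfl)]
  have hBa : ∀ x y, G.Adj x y → (M + G.adjMatrix ℝ) x y = 1 := by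
    intro x y h
    simp [hzero x y (Or.inr h), h]
  apply hne
  generalize M + G.adjMatrix ℝ = B at *
  have hB : B.IsHermitian := by
    ext x y
    simpa using hBs y x
  have hev : ∀ i, IsEigenval B (hB.eigenvalues i) := by
    intro i
    refine ⟨⇑(hB.eigenvectorBasis i), ?_, hB.mulVec_eigenvectorBasis i⟩
    intro h0
    exact hB.eigenvectorBasis.toBasis.ne_zero i (by
      apply (WithLp.ofLp_injective 2); simpa using h0)
  have : Nontrivial V := Fintype.one_lt_card_iff_nontrivial.1 (by omega)
  obtain ⟨x₁⟩ := hconn.nonempty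
  obtain ⟨y₁, hxy⟩ := hconn.preconnected.exists_adj_of_nontrivial x₁
  obtain ⟨a, b, hab⟩ : ∃ a b : ℝ, ∀ i, hB.eigenvalues i = a ∨ hB.eigenvalues i = b := by
    by_cases hall : ∀ i, hB.eigenvalues i = hB.eigenvalues x₁
    · exact ⟨_, 0, fun i => Or.inl (hall i)⟩
    · push Not at hall
      obtain ⟨j, hj⟩ := hall
      refine ⟨hB.eigenvalues x₁, hB.eigenvalues j, fun i => ?_⟩
      by_contra hi
      push Not at hi
      exact hcon ⟨_, _, _, hj.symm, hi.1.symm, hi.2.symm, hev _, hev _, hev _⟩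
  have key : ∃ p q : ℝ, p ≤ q ∧ (B - p • 1) * (B - q • 1) = 0 := by
    rcases le_total a b with h | h
    · exact ⟨a, b, h, aux_quad B hB a b hab⟩
    · exact ⟨b, a, h, aux_quad B hB b a fun i => (hab i).symm⟩
  obtain ⟨p, q, hpq, hquad⟩ := key
  have hBB : B * B = (p + q) • B - (p * q) • 1 := by
    have : (B - p • 1) * (B - q • 1) = B * B - ((p + q) • B - (p * q) • 1) := by
      simp only [sub_mul, mul_sub, Matrix.smul_mul, Matrix.mul_smul, Matrix.one_mul, Matrix.mul_one]
      module
    rw [this] at hquad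
    exact sub_eq_zero.1 hquad
  have hpq0 : p * q < 0 := by
    have h := congrFun (congrFun hBB x₁) x₁
    simp only [Matrix.mul_apply, Matrix.sub_apply, Matrix.smul_apply, hBd, Matrix.one_apply_eq, smul_eq_mul] at h
    have h2 : B x₁ y₁ * B y₁ x₁ ≤ ∑ j, B x₁ j * B j x₁ :=
      Finset.single_le_sum (f := fun j => B x₁ j * B j x₁)
        (fun j _ => mul_nonneg (hB0 _ _) (hB0 _ _)) (Finset.mem_univ y₁)
    rw [hBa _ _ hxy, hBa _ _ hxy.symm] at h2
    linarith
  have hp : p < 0 := by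
    by_contra h
    push Not at h
    nlinarith
  have hq : 0 < q := by
    by_contra h
    push Not at h
    nlinarith
  have hNN : (B - p • 1) * (B - p • 1) = (q - p) • (B - p • 1) := by
    simp only [sub_mul, mul_sub, Matrix.smul_mul, Matrix.mul_smul, Matrix.one_mul, Matrix.mul_one, hBB]
    module
  have hNs : ∀ x y, (B - p • 1) x y = (B - p • 1) y x := by
    intro x y
    simp [hBs x y, Matrix.one_apply, eq_comm]
  have hNd : ∀ x, (B - p • 1) x x = -p := by
    intro x
    simp [hBd]
  have hNo : ∀ x y, x ≠ y → (B - p • 1) x y = B x y := by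
    intro x y h
    simp [h]
  generalize B - p • 1 = N at *
  have hsq : ∀ x y, ∑ z, N x z * N z y = (q - p) * N x y := by
    intro x y
    have := congrFun (congrFun hNN x) y
    simpa [Matrix.mul_apply] using this
  have hN0 : ∀ x y, 0 ≤ N x y := by
    intro x y
    by_cases h : x = y
    · subst h; rw [hNd]; linarith
    · rw [hNo x y h]; exact hB0 x y
  have hpos : ∀ x y, 0 < N x y := by
    intro x y
    obtain ⟨w⟩ := hconn.preconnected x y
    induction w with
    | nil => rw [hNd]; linarith
    | @cons u v t h w ih =>
      have h1 : 0 < N u v := by rw [hNo _ _ h.ne, hBa _ _ h]; norm_num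
      have h2 : N u v * N v t ≤ ∑ z, N u z * N z t :=
        Finset.single_le_sum (f := fun z => N u z * N z t)
          (fun j _ => mul_nonneg (hN0 _ _) (hN0 _ _)) (Finset.mem_univ v)
      rw [hsq] at h2
      exact pos_of_mul_pos_right (lt_of_lt_of_le (mul_pos h1 ih) h2) (by linarith)
  have hconst := aux_rank N (q - p) (-p) (by linarith) (by linarith) hNs hpos hNd hsq
  have hp1 : -p = 1 := by rw [← hconst x₁ y₁, hNo _ _ hxy.ne, hBa _ _ hxy]
  ext x y
  by_cases h : x = y
  · subst h; simp [hBd]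
  · rw [← hNo x y h, hconst, hp1]; simp [h]
end

section
/- Let G be a connected non-complete finite simple graph and let q be a nonzero real number. Then the q-distance matrix 𝔻_q of G has all entries nonnegative and is irreducible if and only if q > 0 or q ≤ −1. -/
/-- The `q`-distance matrix of a graph `G`: the `(x,y)` entry is
`1 + 1/q + ⋯ + 1/q^(d(x,y)-1) = ∑_{j=0}^{d(x,y)-1} q^{-j}` (and `0` on the diagonal,
since `d(x,x) = 0`). -/
noncomputable def qDistMatrix {V : Type*} [Fintype V] (G : SimpleGraph V) (q : ℝ) : Matrix V V ℝ :=
  Matrix.of fun x y => ∑ j ∈ Finset.range (G.dist x y), (1 / q) ^ j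

theorem qd_adj {V : Type*} [Fintype V] (G : SimpleGraph V) (q : ℝ) {x y : V} (h : G.Adj x y) :
    qDistMatrix G q x y = 1 := by
  simp [qDistMatrix, SimpleGraph.dist_eq_one_iff_adj.mpr h]

theorem qd_pow_nonneg {V : Type*} [Fintype V] [DecidableEq V] (M : Matrix V V ℝ)
    (h : ∀ x y, 0 ≤ M x y) (n : ℕ) : ∀ x y, 0 ≤ (M ^ n) x y := by
  induction n with
  | zero => intro x y; rw [pow_zero, Matrix.one_apply]; split_ifs <;> norm_num
  | succ k ih =>
    intro x y
    rw [pow_succ', Matrix.mul_apply]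
    exact Finset.sum_nonneg fun z _ => mul_nonneg (h x z) (ih z y)

theorem qd_walk {V : Type*} [Fintype V] [DecidableEq V] (G : SimpleGraph V) (q : ℝ)
    (h : ∀ x y, 0 ≤ qDistMatrix G q x y) {x y : V} (p : G.Walk x y) :
    0 < (qDistMatrix G q ^ p.length) x y := by
  induction p with
  | nil => simp
  | @cons u v w hadj p ih =>
    rw [SimpleGraph.Walk.length_cons, pow_succ', Matrix.mul_apply]
    refine Finset.sum_pos' (fun z _ => mul_nonneg (h u z) (qd_pow_nonneg _ h _ z w))
      ⟨v, Finset.mem_univ v, ?_⟩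
    rw [qd_adj G q hadj, one_mul]
    exact ih

theorem qd_triple {V : Type*} (G : SimpleGraph V)
    (h : ∀ a b c, G.Adj a b → G.Adj b c → a = c ∨ G.Adj a c) {x y : V} (p : G.Walk x y) :
    x = y ∨ G.Adj x y := by
  induction p with
  | nil => left; rfl
  | cons hadj p ih =>
    rcases ih with rfl | ih
    · right; exact hadj
    · exact h _ _ _ hadj ih

theorem qd_nonneg {V : Type*} [Fintype V] (G : SimpleGraph V) (q : ℝ) (hq : 0 < q ∨ q ≤ -1)
    (x y : V) : 0 ≤ qDistMatrix G q x y := by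
  simp only [qDistMatrix, Matrix.of_apply]
  rcases hq with hq | hq
  · positivity
  · rcases hq.eq_or_lt with rfl | hq
    · rw [show (1 / (-1) : ℝ) = -1 by norm_num, neg_one_geom_sum]
      split_ifs <;> norm_num
    · by_cases h0 : G.dist x y = 0
      · simp [h0]
      · refine (geom_sum_pos' ?_ h0).le
        have : 1 / q + 1 = (-1 - q) / (-q) := by
          have : q ≠ 0 := by linarith
          field_simp
          ring
        rw [this]
        apply div_pos <;> linarith

/-- For a connected non-complete graph `G` and `q ≠ 0`, the `q`-distance matrix has all
entries nonnegative and is irreducible iff `q > 0` or `q ≤ -1`. -/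
theorem stmt1 {V : Type*} [Fintype V] [DecidableEq V] (G : SimpleGraph V)
    (hconn : G.Connected) (hnc : ∃ x y : V, x ≠ y ∧ ¬ G.Adj x y)
    (q : ℝ) (hq : q ≠ 0) :
    ((∀ x y : V, 0 ≤ qDistMatrix G q x y) ∧
        ∀ x y : V, ∃ m : ℕ, 0 < m ∧ 0 < ((qDistMatrix G q) ^ m) x y) ↔
      (0 < q ∨ q ≤ -1) := by
  constructor
  · rintro ⟨h, -⟩
    obtain ⟨x, y, hne, hna⟩ := hnc
    by_contra! hcon
    obtain ⟨h1, h2⟩ := hcon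
    have hq0 : q < 0 := lt_of_le_of_ne h1 hq
    obtain ⟨p⟩ := hconn.preconnected x y
    refine (qd_triple G ?_ p).elim hne hna
    intro a b c hab hbc
    by_contra! hc
    obtain ⟨hac, hnac⟩ := hc
    have hd : G.dist a c = 2 := by
      have hle : G.dist a c ≤ 2 :=
        SimpleGraph.dist_le (SimpleGraph.Walk.cons hab (SimpleGraph.Walk.cons hbc .nil))
      have hd1 : G.dist a c ≠ 1 := fun h => hnac (SimpleGraph.dist_eq_one_iff_adj.mp h)
      have hd0 : 0 < G.dist a c := hconn.pos_dist_of_ne hac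
      omega
    have hh := h a c
    simp only [qDistMatrix, Matrix.of_apply, hd, Finset.sum_range_succ, Finset.sum_range_zero,
      pow_zero, pow_one, zero_add] at hh
    have : 1 / q < -1 := by
      rw [div_lt_iff_of_neg hq0]
      linarith
    linarith
  · intro hh
    have h := qd_nonneg G q hh
    refine ⟨h, fun x y => ?_⟩
    obtain ⟨a, b, hne, -⟩ := hnc
    have : ∃ z, G.Adj x z := by
      have : ∃ w, x ≠ w := by
        by_cases hx : x = a
        · exact ⟨b, hx ▸ hne⟩
        · exact ⟨a, hx⟩
      obtain ⟨w, hw⟩ := this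
      obtain ⟨p⟩ := hconn.preconnected x w
      cases p with
      | nil => exact absurd rfl hw
      | cons hadj _ => exact ⟨_, hadj⟩
    obtain ⟨z, hz⟩ := this
    obtain ⟨p⟩ := hconn.preconnected z y
    exact ⟨_, by simp, qd_walk G q h (SimpleGraph.Walk.cons hz p)⟩
end

section
/- Let G be a connected non-complete finite simple graph and let q be a real number with q ≥ 1 or q ≤ −2. Then the function (x,y) ↦ (𝔻_q)_{xy} given by the q-distance matrix of G is a metric on the vertex set of G: it is symmetric, (𝔻_q)_{xy} = 0 if and only if x = y, and (𝔻_q)_{xy} + (𝔻_q)_{yz} ≥ (𝔻_q)_{xz} for all vertices x, y, z. -/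
theorem geo_add (r : ℝ) (a b : ℕ) : ∑ j ∈ Finset.range (a + b), r ^ j =
    ∑ j ∈ Finset.range a, r ^ j + r ^ a * ∑ j ∈ Finset.range b, r ^ j := by
  rw [Finset.sum_range_add, Finset.mul_sum]
  simp only [pow_add]

theorem geo_bd (r : ℝ) (h1 : -(1/2) ≤ r) (h0 : r ≤ 0) (n : ℕ) :
    1/2 ≤ ∑ j ∈ Finset.range (n + 1), r ^ j ∧ ∑ j ∈ Finset.range (n + 1), r ^ j ≤ 1 := by
  induction n with
  | zero => norm_num
  | succ n ih =>
    have h := geo_add r 1 (n + 1)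
    rw [add_comm 1 (n + 1)] at h
    rw [h]
    simp only [Finset.sum_range_one, pow_zero, pow_one]
    obtain ⟨a, b⟩ := ih
    constructor <;> nlinarith

theorem geo_pos (r : ℝ) (hr : (0 < r ∧ r ≤ 1) ∨ (-(1/2) ≤ r ∧ r ≤ 0)) (n : ℕ) (hn : n ≠ 0) :
    0 < ∑ j ∈ Finset.range n, r ^ j := by
  rcases hr with ⟨h0, h1⟩ | ⟨h1, h0⟩
  · exact Finset.sum_pos (fun i _ => pow_pos h0 i) (by simpa using hn)
  · obtain ⟨m, rfl⟩ := Nat.exists_eq_succ_of_ne_zero hn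
    have := (geo_bd r h1 h0 m).1
    simp only [Nat.succ_eq_add_one]
    linarith

theorem geo_tri (r : ℝ) (hr : (0 < r ∧ r ≤ 1) ∨ (-(1/2) ≤ r ∧ r ≤ 0)) (a b c : ℕ)
    (hc : c ≤ a + b) (ha : a = 0 → c = b) (hb : b = 0 → c = a) :
    ∑ j ∈ Finset.range c, r ^ j ≤
      ∑ j ∈ Finset.range a, r ^ j + ∑ j ∈ Finset.range b, r ^ j := by
  rcases hr with ⟨h0, h1⟩ | ⟨h1, h0⟩
  · have hm : ∑ j ∈ Finset.range c, r ^ j ≤ ∑ j ∈ Finset.range (a + b), r ^ j :=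
      Finset.sum_le_sum_of_subset_of_nonneg (Finset.range_subset_range.2 hc)
        (fun i _ _ => (pow_pos h0 i).le)
    rw [geo_add] at hm
    have hs : 0 ≤ ∑ j ∈ Finset.range b, r ^ j := Finset.sum_nonneg fun i _ => (pow_pos h0 i).le
    have := mul_le_of_le_one_left hs (pow_le_one₀ h0.le h1 : r ^ a ≤ 1)
    linarith
  · rcases a with _ | a
    · simp [ha rfl]
    rcases b with _ | b
    · simp [hb rfl]
    have A := (geo_bd r h1 h0 a).1
    have B := (geo_bd r h1 h0 b).1
    rcases c with _ | c
    · simp only [Finset.range_zero, Finset.sum_empty]; linarith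
    have C := (geo_bd r h1 h0 c).2
    linarith

/-- For a connected non-complete graph `G` and `q ≥ 1` or `q ≤ -2`, the entries of the
`q`-distance matrix define a metric on the vertex set: it is symmetric, vanishes exactly
on the diagonal, and satisfies the triangle inequality. -/
theorem stmt2 {V : Type*} [Fintype V] (G : SimpleGraph V)
    (hconn : G.Connected) (hnc : ∃ x y : V, x ≠ y ∧ ¬ G.Adj x y)
    (q : ℝ) (hq : 1 ≤ q ∨ q ≤ -2) :
    (∀ x y : V, qDistMatrix G q x y = qDistMatrix G q y x) ∧
    (∀ x y : V, qDistMatrix G q x y = 0 ↔ x = y) ∧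
    (∀ x y z : V, qDistMatrix G q x z ≤ qDistMatrix G q x y + qDistMatrix G q y z) := by
  have hr : (0 < 1 / q ∧ 1 / q ≤ 1) ∨ (-(1/2) ≤ 1 / q ∧ 1 / q ≤ 0) := by
    rcases hq with h | h
    · left
      have : 0 < q := by linarith
      exact ⟨by positivity, by rw [div_le_one this]; exact h⟩
    · right
      have : q < 0 := by linarith
      exact ⟨by rw [le_div_iff_of_neg this]; linarith,
        div_nonpos_of_nonneg_of_nonpos zero_le_one this.le⟩
  refine ⟨fun x y => ?_, fun x y => ?_, fun x y z => ?_⟩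
  · simp only [qDistMatrix, Matrix.of_apply, G.dist_comm]
  · simp only [qDistMatrix, Matrix.of_apply]
    constructor
    · intro h
      by_contra hne
      exact (geo_pos _ hr _ (fun h0 => hne (hconn.dist_eq_zero_iff.1 h0))).ne' h
    · rintro rfl
      simp
  · simp only [qDistMatrix, Matrix.of_apply]
    refine geo_tri _ hr _ _ _ hconn.dist_triangle (fun h => ?_) (fun h => ?_)
    · rw [hconn.dist_eq_zero_iff.1 h]
    · rw [hconn.dist_eq_zero_iff.1 h]
end

section
/- Let G be a connected non-complete finite simple graph and let q be a real number with q > 0 or q ≤ −1. Then the q-distance matrix 𝔻_q of G has at least three distinct eigenvalues, and its largest eigenvalue (the spectral radius) has multiplicity one. -/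
section aux
open Matrix Finset

theorem aux_spec {V : Type*} [Fintype V] [DecidableEq V] {A : Matrix V V ℝ} (hH : A.IsHermitian) :
    A = (hH.eigenvectorUnitary : Matrix V V ℝ) * diagonal hH.eigenvalues *
      (hH.eigenvectorUnitary : Matrix V V ℝ)ᴴ := by
  conv_lhs => rw [hH.spectral_theorem, Unitary.conjStarAlgAut_apply]
  rfl

theorem aux_one {V : Type*} [Fintype V] [DecidableEq V] {A : Matrix V V ℝ} (hH : A.IsHermitian) :
    (hH.eigenvectorUnitary : Matrix V V ℝ) * (hH.eigenvectorUnitary : Matrix V V ℝ)ᴴ = 1 :=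
  Unitary.coe_mul_star_self hH.eigenvectorUnitary

theorem aux_shift {V : Type*} [Fintype V] [DecidableEq V] {A : Matrix V V ℝ} (hH : A.IsHermitian)
    (t : ℝ) : A - t • (1 : Matrix V V ℝ) = (hH.eigenvectorUnitary : Matrix V V ℝ) *
      diagonal (fun i => hH.eigenvalues i - t) * (hH.eigenvectorUnitary : Matrix V V ℝ)ᴴ := by
  have h : diagonal (fun i => hH.eigenvalues i - t)
      = diagonal hH.eigenvalues - t • (1 : Matrix V V ℝ) := by
    ext i j
    by_cases hij : i = j <;> simp [hij, diagonal]
  rw [h, Matrix.mul_sub, Matrix.sub_mul, ← aux_spec hH]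
  rw [Matrix.mul_smul, Matrix.smul_mul, Matrix.mul_one, aux_one hH]

theorem aux_psd {V : Type*} [Fintype V] [DecidableEq V] {A : Matrix V V ℝ} (hH : A.IsHermitian)
    (t : ℝ) (ht : ∀ i, hH.eigenvalues i ≤ t) : (t • (1 : Matrix V V ℝ) - A).PosSemidef := by
  have h : t • (1 : Matrix V V ℝ) - A = (hH.eigenvectorUnitary : Matrix V V ℝ) *
      diagonal (fun i => t - hH.eigenvalues i) * (hH.eigenvectorUnitary : Matrix V V ℝ)ᴴ := by
    rw [← neg_sub, aux_shift hH t, ← Matrix.neg_mul, ← Matrix.mul_neg]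
    congr 2
    ext i j
    by_cases hij : i = j <;> simp [hij, diagonal]
  rw [h]
  apply PosSemidef.mul_mul_conjTranspose_same
  apply PosSemidef.diagonal
  intro i
  simpa using ht i

/-- an eigenvector for the top eigenvalue vanishes nowhere -/
theorem aux_nowhere {V : Type*} [Fintype V] [DecidableEq V] {A : Matrix V V ℝ}
    (hH : A.IsHermitian) (G : SimpleGraph V) (hconn : G.Connected)
    (h0 : ∀ x y, 0 ≤ A x y) (h1 : ∀ x y, G.Adj x y → 0 < A x y)
    (t : ℝ) (ht : ∀ i, hH.eigenvalues i ≤ t) (v : V → ℝ) (hv : A *ᵥ v = t • v)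
    (x : V) (hx : v x = 0) : v = 0 := by
  have hpsd := aux_psd hH t ht
  let w : V → ℝ := fun x => |v x|
  have hle : v ⬝ᵥ (A *ᵥ v) ≤ w ⬝ᵥ (A *ᵥ w) := by
    simp only [dotProduct, mulVec, Finset.mul_sum]
    refine Finset.sum_le_sum fun i _ => Finset.sum_le_sum fun j _ => ?_
    calc v i * (A i j * v j) ≤ |v i * (A i j * v j)| := le_abs_self _
      _ = w i * (A i j * w j) := by simp [w, abs_mul, abs_of_nonneg (h0 i j)]
  have hvw : v ⬝ᵥ v = w ⬝ᵥ w := by simp [dotProduct, w]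
  have hz : star w ⬝ᵥ ((t • (1 : Matrix V V ℝ) - A) *ᵥ w) = 0 := by
    apply le_antisymm
    · rw [hv] at hle
      simp only [star_trivial, sub_mulVec, smul_mulVec, one_mulVec, dotProduct_sub,
        dotProduct_smul] at hle ⊢
      rw [hvw] at hle
      linarith
    · exact hpsd.dotProduct_mulVec_nonneg w
  rw [hpsd.dotProduct_mulVec_zero_iff] at hz
  have hw : A *ᵥ w = t • w := by
    simp only [sub_mulVec, smul_mulVec, one_mulVec] at hz
    exact (sub_eq_zero.mp hz).symm
  have step : ∀ a b, G.Adj a b → v a = 0 → v b = 0 := by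
    intro a b hab ha
    have := congrFun hw a
    simp only [mulVec, dotProduct, Pi.smul_apply, smul_eq_mul] at this
    have hwa : w a = 0 := by simp [w, ha]
    rw [hwa, mul_zero, Finset.sum_eq_zero_iff_of_nonneg
      (fun i _ => mul_nonneg (h0 a i) (abs_nonneg _))] at this
    have := this b (mem_univ _)
    rcases mul_eq_zero.mp this with h | h
    · exact absurd h (h1 a b hab).ne'
    · simpa [w] using h
  funext y
  obtain ⟨p⟩ := hconn.preconnected x y
  induction p with
  | nil => exact hx
  | cons hab p ih => exact ih (step _ _ hab hx)

theorem aux_geom (r : ℝ) (hr : -1 ≤ r) (n : ℕ) : 0 ≤ ∑ j ∈ Finset.range n, r ^ j := by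
  rcases le_total 0 r with h | h
  · positivity
  · have h2 := geom_sum_mul r n
    have h3 : |r ^ n| ≤ 1 := by
      rw [abs_pow]
      exact pow_le_one₀ (abs_nonneg _) (abs_le.mpr ⟨hr, by linarith⟩)
    have := (abs_le.mp h3).2
    nlinarith

end aux

/-- For a connected non-complete graph `G` and `q > 0` or `q ≤ -1`, the `q`-distance
matrix has at least three distinct eigenvalues, and its largest eigenvalue
(the spectral radius) has multiplicity one. -/
theorem stmt3 {V : Type*} [Fintype V] [DecidableEq V] [Nonempty V] (G : SimpleGraph V)
    (hconn : G.Connected) (hnc : ∃ x y : V, x ≠ y ∧ ¬ G.Adj x y)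
    (q : ℝ) (hq : 0 < q ∨ q ≤ -1)
    (hH : (qDistMatrix G q).IsHermitian) :
    (∃ a b c : ℝ, a ≠ b ∧ a ≠ c ∧ b ≠ c ∧
        IsEigenval (qDistMatrix G q) a ∧ IsEigenval (qDistMatrix G q) b ∧
        IsEigenval (qDistMatrix G q) c) ∧
      (Finset.univ.filter fun i : V =>
          hH.eigenvalues i = Finset.univ.sup' Finset.univ_nonempty hH.eigenvalues).card = 1 := by
  classical
  set A := qDistMatrix G q with hA
  set r := 1 / q with hrdef
  have hr : -1 ≤ r := by
    rcases hq with h | h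
    · have : 0 < r := by positivity
      linarith
    · rw [hrdef, le_div_iff_of_neg (by linarith)]
      linarith
  have hr0 : r ≠ 0 := by
    have : q ≠ 0 := by rcases hq with h | h <;> [exact h.ne'; exact (by linarith : q < 0).ne]
    exact one_div_ne_zero this
  have h0 : ∀ x y, 0 ≤ A x y := fun x y => aux_geom r hr _
  have hadj : ∀ x y, G.Adj x y → A x y = 1 := by
    intro x y h
    simp [hA, qDistMatrix, SimpleGraph.dist_eq_one_iff_adj.mpr h]
  have hdiag : ∀ x, A x x = 0 := by
    intro x
    simp [hA, qDistMatrix]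
  have h1 : ∀ x y, G.Adj x y → 0 < A x y := fun x y h => by rw [hadj x y h]; exact one_pos
  have hv : ∀ i, A.mulVec (hH.eigenvectorBasis i) =
      hH.eigenvalues i • (hH.eigenvectorBasis i : V → ℝ) := hH.mulVec_eigenvectorBasis
  have hvne : ∀ i, (hH.eigenvectorBasis i : V → ℝ) ≠ 0 := by
    intro i h
    apply hH.eigenvectorBasis.toBasis.ne_zero i
    ext x
    simpa using congrFun h x
  obtain ⟨i0, -, hi0⟩ := Finset.exists_mem_eq_sup' (Finset.univ_nonempty (α := V)) hH.eigenvalues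
  have hmax : ∀ i, hH.eigenvalues i ≤ hH.eigenvalues i0 := by
    intro i
    rw [← hi0]
    exact Finset.le_sup' _ (Finset.mem_univ i)
  have huniq : ∀ i, hH.eigenvalues i = hH.eigenvalues i0 → i = i0 := by
    intro i hi
    by_contra hne
    obtain ⟨x⟩ := ‹Nonempty V›
    set u := hH.eigenvectorBasis i with hu
    set u0 := hH.eigenvectorBasis i0 with hu0
    have key := aux_nowhere hH G hconn h0 h1 _ hmax
      ((u0 x) • (u : V → ℝ) - (u x) • (u0 : V → ℝ))
      (by
        rw [Matrix.mulVec_sub, Matrix.mulVec_smul, Matrix.mulVec_smul, hv i, hv i0, hi]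
        ext y
        simp only [Pi.sub_apply, Pi.smul_apply, smul_eq_mul]
        ring) x (by simp [mul_comm])
    have hx0 : u0 x ≠ 0 := fun h =>
      hvne i0 (aux_nowhere hH G hconn h0 h1 _ hmax _ (hv i0) x h)
    have key2 : (u0 x) • u - (u x) • u0 = 0 := by
      ext y
      simpa using congrFun key y
    have h3 : inner ℝ u ((u0 x) • u - (u x) • u0) = 0 := by rw [key2]; simp
    rw [inner_sub_right, inner_smul_right, inner_smul_right, hu, hu0,
      hH.eigenvectorBasis.inner_eq_zero hne, real_inner_self_eq_norm_sq,
      hH.eigenvectorBasis.norm_eq_one] at h3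
    simp at h3
    exact hx0 h3
  have hev : ∀ i, IsEigenval A (hH.eigenvalues i) := fun i => ⟨_, hvne i, hv i⟩
  refine ⟨?_, ?_⟩
  · by_contra hcon
    have hsame : ∀ i j, i ≠ i0 → j ≠ i0 → hH.eigenvalues i = hH.eigenvalues j := by
      intro i j hi hj
      by_contra hij
      exact hcon ⟨_, _, _, fun h => hi (huniq i h.symm), fun h => hj (huniq j h.symm), hij,
        hev i0, hev i, hev j⟩
    obtain ⟨t, ht⟩ : ∃ t, ∀ i, i ≠ i0 → hH.eigenvalues i = t := by
      by_cases h : ∃ j, j ≠ i0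
      · obtain ⟨j, hj⟩ := h
        exact ⟨_, fun i hi => hsame i j hi hj⟩
      · exact ⟨0, fun i hi => absurd ⟨i, hi⟩ h⟩
    obtain ⟨c, b, hcb⟩ : ∃ (c : ℝ) (b : V → ℝ), ∀ x y,
        A x y - t * (1 : Matrix V V ℝ) x y = c * b x * b y := by
      refine ⟨hH.eigenvalues i0 - t, fun x => (hH.eigenvectorUnitary : Matrix V V ℝ) x i0, ?_⟩
      intro x y
      have := congrFun (congrFun (aux_shift hH t) x) y
      rw [Matrix.sub_apply, Matrix.smul_apply, smul_eq_mul] at this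
      rw [this, Matrix.mul_apply, Finset.sum_eq_single i0]
      · rw [Matrix.mul_diagonal, Matrix.conjTranspose_apply, star_trivial]
        ring
      · intro j _ hj
        rw [Matrix.mul_diagonal, ht j hj]
        simp
      · simp
    obtain ⟨x', y', hxy, hnadj⟩ := hnc
    obtain ⟨p, hp⟩ := (hconn.preconnected x' y').exists_walk_length_eq_dist
    obtain ⟨x, y, z, hxy1, hyz, hxz, hne⟩ := SimpleGraph.Walk.exists_adj_adj_not_adj_ne hp
      (hconn.one_lt_dist_of_ne_of_not_adj hxy hnadj)
    have hd : G.dist x z = 2 := by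
      apply le_antisymm
      · exact SimpleGraph.dist_le (SimpleGraph.Walk.cons hxy1 (SimpleGraph.Walk.cons hyz SimpleGraph.Walk.nil))
      · exact hconn.one_lt_dist_of_ne_of_not_adj hne hxz
    have hAxz : A x z = 1 + r := by
      simp [hA, qDistMatrix, hd, Finset.sum_range_succ, hrdef]
    have e1 := hcb x y
    have e2 := hcb y z
    have e3 := hcb x z
    have e4 := hcb x x
    have e5 := hcb y y
    rw [hadj x y hxy1, Matrix.one_apply_ne hxy1.ne] at e1
    rw [hadj y z hyz, Matrix.one_apply_ne hyz.ne] at e2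
    rw [hAxz, Matrix.one_apply_ne hne] at e3
    rw [hdiag, Matrix.one_apply_eq] at e4 e5
    have hcy : c * b y ≠ 0 := by
      intro h
      rw [h] at e2
      norm_num at e2
    have hxz' : b x = b z := mul_left_cancel₀ hcy (by linarith)
    rw [← hxz'] at e3
    have ht1 : 1 + r = -t := by linarith
    have ht2 : t * t = 1 := by
      have : (c * b x * b x) * (c * b y * b y) = (c * b x * b y) * (c * b x * b y) := by ring
      rw [← e1, ← e4, ← e5] at this
      linarith
    have : r * (r + 2) = 0 := by
      have : t = -(1 + r) := by linarith
      rw [this] at ht2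
      linarith
    rcases mul_eq_zero.mp this with h | h
    · exact hr0 h
    · linarith
  · rw [Finset.card_eq_one]
    refine ⟨i0, ?_⟩
    ext i
    rw [Finset.mem_filter, Finset.mem_singleton, hi0]
    exact ⟨fun h => huniq i h.2, fun h => ⟨Finset.mem_univ _, by rw [h]⟩⟩
end

section
/- Let Γ be a distance-regular graph of diameter D ≥ 2 and valency k on n ≥ 3 vertices, let q be a nonzero real number, and let θ ≠ k be an eigenvalue of the adjacency matrix of Γ of classical q-type. Then the q-distance matrix 𝔻_q of Γ has exactly three distinct eigenvalues, one of which is 0. Moreover, q > 0 or q ≤ −1 holds. -/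
/-- `G` is a distance-regular graph of diameter `D` with intersection numbers
`p h i j = p^h_{ij}`: for any two vertices `x, y` at distance `h`, the number of
vertices `z` with `d(x,z) = i` and `d(y,z) = j` equals `p h i j`. -/
structure IsDRG {V : Type*} [Fintype V] (G : SimpleGraph V) (D : ℕ)
    (p : ℕ → ℕ → ℕ → ℕ) : Prop where
  connected : G.Connected
  dist_le : ∀ x y : V, G.dist x y ≤ D
  exists_dist_eq : ∃ x y : V, G.dist x y = D
  inter : ∀ h i j : ℕ, h ≤ D → i ≤ D → j ≤ D → ∀ x y : V, G.dist x y = h →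
    {z : V | G.dist x z = i ∧ G.dist y z = j}.ncard = p h i j

/-- `u` is the standard sequence of `θ` for a distance-regular graph with
intersection numbers `p` (so valency `k = b₀ = p 0 1 1`, `cᵢ = p i 1 (i-1)`,
`aᵢ = p i 1 i`, `bᵢ = p i 1 (i+1)`). -/
def IsStdSeq (D : ℕ) (p : ℕ → ℕ → ℕ → ℕ) (θ : ℝ) (u : ℕ → ℝ) : Prop :=
  u 0 = 1 ∧ u 1 = θ / (p 0 1 1 : ℝ) ∧
    ∀ i : ℕ, 1 ≤ i → i ≤ D - 1 →
      (p i 1 (i - 1) : ℝ) * u (i - 1) + (p i 1 i : ℝ) * u i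
          + (p i 1 (i + 1) : ℝ) * u (i + 1) = θ * u i

/-- The sequence `u` (a standard sequence) is of classical `q`-type:
`u i = (1/q) * u (i-1) + c` for `i = 1, …, D`, for some real `c`. -/
def IsClassicalQType (D : ℕ) (q : ℝ) (u : ℕ → ℝ) : Prop :=
  ∃ c : ℝ, ∀ i : ℕ, 1 ≤ i → i ≤ D → u i = (1 / q) * u (i - 1) + c

/-- `θ` is an eigenvalue of the adjacency matrix of `G`. -/
def IsAdjEigenval {V : Type*} [Fintype V] (G : SimpleGraph V) [DecidableRel G.Adj]
    (θ : ℝ) : Prop :=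
  ∃ v : V → ℝ, v ≠ 0 ∧ (G.adjMatrix ℝ).mulVec v = θ • v

open Polynomial in
theorem aux_aeval {V : Type*} [Fintype V] [DecidableEq V] (A M : Matrix V V ℝ) (θ : ℝ)
    (h : A * M = θ • M) (g : ℝ[X]) : aeval A g * M = (g.eval θ) • M := by
  induction g using Polynomial.induction_on' with
  | add a b ha hb => simp [add_mul, ha, hb, add_smul]
  | monomial n a =>
    have hn : A ^ n * M = θ ^ n • M := by
      induction n with
      | zero => simp
      | succ n ih => rw [pow_succ, mul_assoc, h, Matrix.mul_smul, ih, smul_smul, pow_succ, mul_comm]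
    rw [aeval_monomial, eval_monomial, mul_assoc, hn, ← Algebra.smul_def, smul_smul]

/-- matrix depending on the distance only -/
noncomputable def dmat {V : Type*} (G : SimpleGraph V) (f : ℕ → ℝ) : Matrix V V ℝ :=
  Matrix.of fun x y => f (G.dist x y)

theorem aux_mul {V : Type*} [Fintype V] (G : SimpleGraph V) [DecidableRel G.Adj]
    (D : ℕ) (p : ℕ → ℕ → ℕ → ℕ) (hdrg : IsDRG G D p) (hD : 2 ≤ D) (f : ℕ → ℝ) :
    G.adjMatrix ℝ * dmat G f =
      dmat G (fun h => ∑ j ∈ Finset.range (D + 1), (p h 1 j : ℝ) * f j) := by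
  classical
  ext x y
  simp only [Matrix.mul_apply, dmat, Matrix.of_apply, SimpleGraph.adjMatrix_apply]
  have h1 : ∀ z, (if G.Adj x z then (1:ℝ) else 0) * f (G.dist z y)
      = ∑ j ∈ Finset.range (D + 1), (if G.dist x z = 1 ∧ G.dist y z = j then 1 else 0) * f j := by
    intro z
    rw [Finset.sum_eq_single (G.dist y z)]
    · simp [SimpleGraph.dist_eq_one_iff_adj, SimpleGraph.dist_comm (u := z)]
    · intro b _ hb
      simp [hb.symm]
    · intro hb
      exact absurd (Finset.mem_range.2 (Nat.lt_succ_of_le (hdrg.dist_le y z))) hb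
  rw [Finset.sum_congr rfl (fun z _ => h1 z), Finset.sum_comm]
  refine Finset.sum_congr rfl fun j hj => ?_
  rw [← Finset.sum_mul]
  congr 1
  rw [← hdrg.inter _ 1 j (hdrg.dist_le x y) (by omega) (by simpa [Nat.lt_succ_iff] using hj) x y rfl]
  rw [Set.ncard_eq_toFinset_card']
  simp

open Polynomial in
theorem aux_poly {V : Type*} [Fintype V] [DecidableEq V] (G : SimpleGraph V) [DecidableRel G.Adj]
    (D : ℕ) (p : ℕ → ℕ → ℕ → ℕ) (hdrg : IsDRG G D p) (hD : 2 ≤ D) (g : ℝ[X]) :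
    ∃ f, aeval (G.adjMatrix ℝ) g = dmat G f := by
  induction g using Polynomial.induction_on' with
  | add a b ha hb =>
    obtain ⟨f, hf⟩ := ha
    obtain ⟨f', hf'⟩ := hb
    exact ⟨fun h => f h + f' h, by rw [map_add, hf, hf']; ext; simp [dmat]⟩
  | monomial n a =>
    induction n with
    | zero =>
      refine ⟨fun h => if h = 0 then a else 0, ?_⟩
      ext x y
      simp [dmat, Matrix.algebraMap_matrix_apply, hdrg.connected.dist_eq_zero_iff]
    | succ n ih =>
      obtain ⟨f, hf⟩ := ih
      refine ⟨_, Eq.trans ?_ (aux_mul G D p hdrg hD f)⟩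
      rw [← hf, aeval_monomial, aeval_monomial, pow_succ', ← mul_assoc, ← mul_assoc,
        Algebra.commutes]

theorem aux_step {V : Type*} (G : SimpleGraph V) (hc : G.Connected) (z y : V) (h : ℕ)
    (hh : G.dist z y = h + 1) : ∃ x, G.Adj z x ∧ G.dist x y = h := by
  obtain ⟨w, hw⟩ := hc.exists_walk_length_eq_dist z y
  cases w with
  | nil => simp at hh
  | cons hadj w' =>
    rename_i x
    refine ⟨x, hadj, ?_⟩
    have h1 := SimpleGraph.dist_le w'
    have h2 := hc.dist_triangle (u := z) (v := x) (w := y)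
    have h3 := SimpleGraph.dist_eq_one_iff_adj.2 hadj
    simp at hw
    omega

theorem aux_ex {V : Type*} [Fintype V] (G : SimpleGraph V)
    (D : ℕ) (p : ℕ → ℕ → ℕ → ℕ) (hdrg : IsDRG G D p) (h : ℕ) (hh : h ≤ D) :
    ∃ x y, G.dist x y = h := by
  induction hh using Nat.decreasingInduction with
  | self => exact hdrg.exists_dist_eq
  | of_succ k hk ih =>
    obtain ⟨z, y, hzy⟩ := ih
    obtain ⟨x, _, hx⟩ := aux_step G hdrg.connected z y k hzy
    exact ⟨x, y, hx⟩

theorem aux_b {V : Type*} [Fintype V] (G : SimpleGraph V)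
    (D : ℕ) (p : ℕ → ℕ → ℕ → ℕ) (hdrg : IsDRG G D p) (hD : 2 ≤ D) (h : ℕ) (hh : h + 1 ≤ D) :
    p h 1 (h + 1) ≠ 0 := by
  obtain ⟨z, y, hzy⟩ := aux_ex G D p hdrg _ hh
  obtain ⟨x, hx, hxy⟩ := aux_step G hdrg.connected z y h hzy
  rw [← hdrg.inter h 1 (h+1) (by omega) (by omega) hh x y hxy]
  have : z ∈ {z : V | G.dist x z = 1 ∧ G.dist y z = h + 1} :=
    ⟨SimpleGraph.dist_eq_one_iff_adj.2 hx.symm, by rw [SimpleGraph.dist_comm]; exact hzy⟩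
  exact Set.ncard_ne_zero_of_mem this

theorem aux_zero {V : Type*} [Fintype V] (G : SimpleGraph V)
    (D : ℕ) (p : ℕ → ℕ → ℕ → ℕ) (hdrg : IsDRG G D p) (hD : 2 ≤ D) (h j : ℕ) (hh : h ≤ D)
    (hj : j ≤ D) (hne : h + 1 < j ∨ j + 1 < h) : p h 1 j = 0 := by
  obtain ⟨x, y, hxy⟩ := aux_ex G D p hdrg _ hh
  rw [← hdrg.inter h 1 j hh (by omega) hj x y hxy]
  rw [Set.ncard_eq_zero]
  ext z
  simp only [Set.mem_ofPred_eq, Set.mem_empty_iff_false, iff_false]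
  rintro ⟨h1, h2⟩
  have t1 := hdrg.connected.dist_triangle (u := x) (v := z) (w := y)
  have t2 := hdrg.connected.dist_triangle (u := y) (v := x) (w := z)
  rw [SimpleGraph.dist_comm (u := z)] at t1
  rw [SimpleGraph.dist_comm (u := y) (v := x)] at t2
  omega

theorem aux_zero0 {V : Type*} [Fintype V] (G : SimpleGraph V)
    (D : ℕ) (p : ℕ → ℕ → ℕ → ℕ) (hdrg : IsDRG G D p) (hD : 2 ≤ D) : p 0 1 0 = 0 := by
  obtain ⟨x, y, hxy⟩ := aux_ex G D p hdrg 0 (by omega)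
  rw [← hdrg.inter 0 1 0 (by omega) (by omega) (by omega) x y hxy]
  rw [Set.ncard_eq_zero]
  ext z
  simp only [Set.mem_ofPred_eq, Set.mem_empty_iff_false, iff_false]
  rintro ⟨h1, h2⟩
  have := hdrg.connected.dist_triangle (u := x) (v := y) (w := z)
  omega

/-- the standard sequence matrix -/
theorem aux_U {V : Type*} [Fintype V] (G : SimpleGraph V) [DecidableRel G.Adj]
    (D : ℕ) (p : ℕ → ℕ → ℕ → ℕ) (hdrg : IsDRG G D p) (hD : 2 ≤ D)
    (θ : ℝ) (hθ : IsAdjEigenval G θ)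
    (u : ℕ → ℝ) (hu : IsStdSeq D p θ u) :
    G.adjMatrix ℝ * dmat G u = θ • dmat G u ∧
      ∃ μ : ℝ, dmat G u * dmat G u = μ • dmat G u := by
  classical
  open Polynomial in
  set A := G.adjMatrix ℝ with hA
  obtain ⟨v, hv0, hv⟩ := hθ
  have hroot : (minpoly ℝ A).IsRoot θ := by
    have h1 := aux_aeval A (Matrix.of fun x _ => v x) θ (by
      ext x y
      have := congrFun hv x
      simpa [hA, Matrix.mul_apply, Matrix.mulVec, dotProduct] using this) (minpoly ℝ A)
    rw [minpoly.aeval, zero_mul] at h1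
    obtain ⟨x, hx⟩ := Function.ne_iff.1 hv0
    have h2 := congrFun (congrFun h1 x) x
    simp at h2
    rcases h2 with h2 | h2
    · exact h2
    · exact absurd h2 hx
  obtain ⟨g, hg⟩ := dvd_iff_isRoot.2 hroot
  have hint : IsIntegral ℝ A := Matrix.isIntegral A
  have hm0 : minpoly ℝ A ≠ 0 := minpoly.ne_zero hint
  have hg0 : g ≠ 0 := by rintro rfl; simp at hg; exact hm0 hg
  have hF0 : aeval A g ≠ 0 := by
    intro h0
    have := minpoly.degree_le_of_ne_zero ℝ A hg0 h0
    rw [hg, degree_mul, degree_X_sub_C, degree_eq_natDegree hg0] at this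
    have h3 : 1 + g.natDegree ≤ g.natDegree := by exact_mod_cast this
    omega
  have hAF : A * aeval A g = θ • aeval A g := by
    have h1 := minpoly.aeval ℝ A
    rw [hg, map_mul, map_sub, aeval_X, aeval_C, sub_mul, ← Algebra.smul_def] at h1
    exact sub_eq_zero.1 h1
  obtain ⟨f, hf⟩ := aux_poly G D p hdrg hD g
  rw [← hA] at hf
  have hrec : ∀ h ≤ D, ∑ j ∈ Finset.range (D + 1), (p h 1 j : ℝ) * f j = θ * f h := by
    intro h hh
    obtain ⟨x, y, hxy⟩ := aux_ex G D p hdrg h hh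
    rw [hf, hA, aux_mul G D p hdrg hD f] at hAF
    have := congrFun (congrFun hAF x) y
    simpa [dmat, hxy] using this
  obtain ⟨hu0, hu1, hur⟩ := hu
  have hk : (p 0 1 1 : ℝ) ≠ 0 := by exact_mod_cast aux_b G D p hdrg hD 0 (by omega)
  have hf1 : f 1 = f 0 * u 1 := by
    have h := hrec 0 (by omega)
    rw [Finset.sum_eq_single 1] at h
    · rw [hu1]; field_simp; linarith
    · intro j hj hj1
      have hj' : j ≤ D := by simpa [Nat.lt_succ_iff] using hj
      rcases Nat.eq_zero_or_pos j with rfl | hp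
      · simp [aux_zero0 G D p hdrg hD]
      · rw [aux_zero G D p hdrg hD 0 j (by omega) hj' (by omega)]; simp
    · intro h; simp at h; omega
  have hfu : ∀ i, i + 1 ≤ D → f i = f 0 * u i ∧ f (i + 1) = f 0 * u (i + 1) := by
    intro i
    induction i with
    | zero => intro _; exact ⟨by simp [hu0], hf1⟩
    | succ i ih =>
      intro hi
      obtain ⟨e1, e2⟩ := ih (by omega)
      refine ⟨e2, ?_⟩
      have h := hrec (i + 1) (by omega)
      have hs : ({i, i + 1, i + 1 + 1} : Finset ℕ) ⊆ Finset.range (D + 1) := by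
        intro j hj; simp at hj; simp; omega
      rw [← Finset.sum_subset hs] at h
      · rw [Finset.sum_insert (by simp; omega), Finset.sum_insert (by simp), Finset.sum_singleton] at h
        have h' := hur (i + 1) (by omega) (by omega)
        simp only [Nat.add_sub_cancel] at h'
        have hb : (p (i+1) 1 (i+1+1) : ℝ) ≠ 0 := by
          exact_mod_cast aux_b G D p hdrg hD (i+1) hi
        apply mul_left_cancel₀ hb
        rw [e1, e2] at h
        linear_combination h - f 0 * h'
      · intro j hj hj1
        have hj' : j ≤ D := by simpa [Nat.lt_succ_iff] using hj
        simp at hj1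
        rw [aux_zero G D p hdrg hD (i+1) j (by omega) hj' (by omega)]; simp
  have hfu' : ∀ i ≤ D, f i = f 0 * u i := by
    intro i hi
    rcases Nat.eq_zero_or_pos i with rfl | hp
    · simp [hu0]
    · have := (hfu (i-1) (by omega)).2
      rwa [Nat.sub_add_cancel hp] at this
  have hFU : aeval A g = f 0 • dmat G u := by
    rw [hf]; ext x y
    simp [dmat, hfu' _ (hdrg.dist_le x y)]
  have hf0 : f 0 ≠ 0 := by
    intro h; rw [h, zero_smul] at hFU; exact hF0 hFU
  have hUF : dmat G u = (f 0)⁻¹ • aeval A g := by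
    rw [hFU, smul_smul, inv_mul_cancel₀ hf0, one_smul]
  have hAU : A * dmat G u = θ • dmat G u := by
    rw [hUF, Matrix.mul_smul, hAF, smul_comm]
  refine ⟨hAU, (f 0)⁻¹ * g.eval θ, ?_⟩
  calc dmat G u * dmat G u = ((f 0)⁻¹ • aeval A g) * dmat G u := by rw [← hUF]
    _ = _ := by rw [Matrix.smul_mul, aux_aeval A _ θ hAU g, smul_smul]

/-- If a distance-regular graph `Γ` of diameter `D ≥ 2` on `n ≥ 3` vertices has an
eigenvalue `θ ≠ k` of classical `q`-type, then the `q`-distance matrix has exactly three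
distinct eigenvalues, one of which is `0`; moreover `q > 0` or `q ≤ -1`. -/
theorem stmt6 {V : Type*} [Fintype V] (G : SimpleGraph V) [DecidableRel G.Adj]
    (D : ℕ) (p : ℕ → ℕ → ℕ → ℕ) (hdrg : IsDRG G D p) (hD : 2 ≤ D)
    (hcard : 3 ≤ Fintype.card V)
    (q : ℝ) (hq : q ≠ 0)
    (θ : ℝ) (hθ : IsAdjEigenval G θ) (hθk : θ ≠ (p 0 1 1 : ℝ))
    (u : ℕ → ℝ) (hu : IsStdSeq D p θ u) (hct : IsClassicalQType D q u) :
    (∃ a b : ℝ, a ≠ b ∧ a ≠ 0 ∧ b ≠ 0 ∧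
        {η : ℝ | IsEigenval (qDistMatrix G q) η} = {a, b, 0}) ∧
      (0 < q ∨ q ≤ -1) := by
  classical
  obtain ⟨hAU, μ, hUU⟩ := aux_U G D p hdrg hD θ hθ u hu
  obtain ⟨hu0, hu1, -⟩ := hu
  obtain ⟨c, hc⟩ := hct
  have hk : (p 0 1 1 : ℝ) ≠ 0 := by exact_mod_cast aux_b G D p hdrg hD 0 (by omega)
  have hu1ne : u 1 ≠ 1 := by
    rw [hu1]; intro h; rw [div_eq_one_iff_eq hk] at h; exact hθk h
  set r := 1 / q with hr
  have hdiff : ∀ i, i ≤ D → u i = 1 + (u 1 - 1) * ∑ j ∈ Finset.range i, r ^ j := by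
    intro i
    induction i with
    | zero => intro _; simp [hu0]
    | succ i ih =>
      intro hi
      have h1 := hc (i+1) (by omega) hi
      have h2 := hc 1 (by omega) (by omega)
      simp only [Nat.add_sub_cancel, Nat.sub_self, hu0] at h1 h2
      rw [geom_sum_succ]
      rw [ih (by omega)] at h1
      linear_combination h1 - h2
  have hUsq : ∀ x y, ∑ z, u (G.dist x z) * u (G.dist y z) = μ * u (G.dist x y) := by
    intro x y
    have := congrFun (congrFun hUU x) y
    simp only [Matrix.mul_apply, dmat, Matrix.of_apply, Matrix.smul_apply, smul_eq_mul] at this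
    rw [← this]
    exact Finset.sum_congr rfl fun z _ => by rw [SimpleGraph.dist_comm (u := y)]
  have hμ : 0 < μ := by
    obtain ⟨x, -⟩ := hdrg.exists_dist_eq
    have h := hUsq x x
    rw [SimpleGraph.dist_self, hu0, mul_one] at h
    rw [← h]
    apply Finset.sum_pos'
    · intro z _; exact mul_self_nonneg _
    · exact ⟨x, Finset.mem_univ _, by simp [hu0]⟩
  have hle : ∀ h ≤ D, u h ≤ 1 := by
    intro h hh
    obtain ⟨x, y, hxy⟩ := aux_ex G D p hdrg h hh
    have h0 : 0 ≤ ∑ z, (u (G.dist x z) - u (G.dist y z)) ^ 2 :=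
      Finset.sum_nonneg fun z _ => sq_nonneg _
    have h1 : ∑ z, (u (G.dist x z) - u (G.dist y z)) ^ 2
        = ∑ z, u (G.dist x z) * u (G.dist x z) + ∑ z, u (G.dist y z) * u (G.dist y z)
          - 2 * ∑ z, u (G.dist x z) * u (G.dist y z) := by
      rw [Finset.mul_sum, ← Finset.sum_add_distrib, ← Finset.sum_sub_distrib]
      exact Finset.sum_congr rfl fun z _ => by ring
    rw [h1, hUsq, hUsq, hUsq, hxy, SimpleGraph.dist_self, SimpleGraph.dist_self, hu0] at h0
    nlinarith
  have hlt : u 1 < 1 := lt_of_le_of_ne (hle 1 (by omega)) hu1ne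
  have hu2 : u 2 = 1 + (u 1 - 1) * (1 + r) := by
    rw [hdiff 2 hD]; simp [Finset.sum_range_succ]
  have hr0 : r ≠ 0 := by rw [hr]; exact one_div_ne_zero hq
  refine ⟨?_, ?_⟩
  swap
  · by_contra! hcon
    obtain ⟨hq0, hq1⟩ := hcon
    have hqneg : q < 0 := lt_of_le_of_ne hq0 hq
    have : r < -1 := by
      rw [hr, div_lt_iff_of_neg hqneg]; linarith
    have := hle 2 hD
    nlinarith
  -- column sums
  have hdeg : ∀ z, ∑ x, G.adjMatrix ℝ x z = p 0 1 1 := by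
    intro z
    rw [← hdrg.inter 0 1 1 (by omega) (by omega) (by omega) z z (SimpleGraph.dist_self)]
    rw [Set.ncard_eq_toFinset_card']
    simp [SimpleGraph.adjMatrix_apply, SimpleGraph.dist_eq_one_iff_adj, G.adj_comm _ z]
  have hcol : ∀ y, ∑ x, u (G.dist x y) = 0 := by
    intro y
    have h1 : ∑ x, (G.adjMatrix ℝ * dmat G u) x y = θ * ∑ x, u (G.dist x y) := by
      rw [hAU]; simp [dmat, Finset.mul_sum]
    have h2 : ∑ x, (G.adjMatrix ℝ * dmat G u) x y = (p 0 1 1) * ∑ x, u (G.dist x y) := by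
      simp only [Matrix.mul_apply]
      rw [Finset.sum_comm, Finset.mul_sum]
      refine Finset.sum_congr rfl fun z _ => ?_
      rw [← Finset.sum_mul, hdeg]; rfl
    have h3 : (θ - p 0 1 1) * ∑ x, u (G.dist x y) = 0 := by rw [sub_mul, ← h1, ← h2, sub_self]
    exact (mul_eq_zero.1 h3).resolve_left (sub_ne_zero.2 hθk)
  have hrow : ∀ x, ∑ y, u (G.dist x y) = 0 := by
    intro x; rw [← hcol x]
    exact Finset.sum_congr rfl fun z _ => by rw [SimpleGraph.dist_comm]
  set n : ℝ := (Fintype.card V : ℝ) with hn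
  have hnpos : 0 < n := by rw [hn]; exact_mod_cast (by omega : 0 < Fintype.card V)
  set t : ℝ := (1 - u 1)⁻¹ with ht
  have htpos : 0 < t := inv_pos.2 (by linarith)
  have hM : ∀ (v : V → ℝ) x, (qDistMatrix G q).mulVec v x
      = t * (∑ y, v y - ∑ y, u (G.dist x y) * v y) := by
    intro v x
    rw [← Finset.sum_sub_distrib, Finset.mul_sum]
    simp only [Matrix.mulVec, dotProduct, qDistMatrix, Matrix.of_apply]
    refine Finset.sum_congr rfl fun y _ => ?_
    rw [hdiff _ (hdrg.dist_le x y), ht]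
    have : 1 - u 1 ≠ 0 := by linarith
    field_simp
    ring
  refine ⟨t * n, -(t * μ), ?_, ?_, ?_, ?_⟩
  · have := mul_pos htpos hnpos
    have := mul_pos htpos hμ
    linarith
  · exact (mul_pos htpos hnpos).ne'
  · exact neg_ne_zero.2 (mul_pos htpos hμ).ne'
  ext η
  simp only [Set.mem_ofPred_eq, Set.mem_insert_iff, Set.mem_singleton_iff]
  constructor
  · rintro ⟨v, hv0, hv⟩
    -- s = ∑ v, w = U v
    have e1 : ∀ x, t * (∑ y, v y - ∑ y, u (G.dist x y) * v y) = η * v x := by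
      intro x; rw [← hM, hv]; simp
    by_cases hη : η = 0
    · right; right; exact hη
    have hs : t * n * ∑ y, v y = η * ∑ y, v y := by
      have := Finset.sum_congr rfl (fun x (_ : x ∈ Finset.univ) => e1 x)
      rw [← Finset.mul_sum, ← Finset.mul_sum, Finset.sum_sub_distrib] at this
      have h0 : ∑ x, ∑ y, u (G.dist x y) * v y = 0 := by
        rw [Finset.sum_comm]
        simp only [← Finset.sum_mul, hcol]
        simp
      rw [h0] at this
      simp at this
      rw [← this, hn]; ring
    by_cases hs0 : ∑ y, v y = 0
    · right; left
      have e2 : ∀ x, -t * μ * ∑ y, u (G.dist x y) * v y = η * ∑ y, u (G.dist x y) * v y := by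
        intro x
        have h1 : ∑ z, u (G.dist x z) * ∑ y, u (G.dist z y) * v y
            = μ * ∑ y, u (G.dist x y) * v y := by
          simp only [Finset.mul_sum]
          rw [Finset.sum_comm]
          refine Finset.sum_congr rfl fun y _ => ?_
          rw [← mul_assoc, ← hUsq, Finset.sum_mul]
          refine Finset.sum_congr rfl fun z _ => ?_
          rw [SimpleGraph.dist_comm (u := z)]; ring
        have h2 : -t * ∑ z, u (G.dist x z) * ∑ y, u (G.dist z y) * v y
            = η * ∑ y, u (G.dist x y) * v y := by
          rw [Finset.mul_sum, Finset.mul_sum]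
          refine Finset.sum_congr rfl fun z _ => ?_
          have := e1 z
          rw [hs0] at this
          linear_combination u (G.dist x z) * this
        rw [← h2, h1]; ring
      obtain ⟨x, hx⟩ := Function.ne_iff.1 hv0
      have hw : ∑ y, u (G.dist x y) * v y ≠ 0 := by
        intro h
        have := e1 x
        rw [hs0, h] at this
        simp at this
        rcases this with h | h
        · exact hη h
        · exact hx h
      have := mul_right_cancel₀ hw (e2 x)
      linarith
    · left
      exact (mul_right_cancel₀ hs0 hs).symm
  · rintro (rfl | rfl | rfl)
    · refine ⟨fun _ => 1, ?_, ?_⟩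
      · obtain ⟨x, -⟩ := hdrg.exists_dist_eq
        intro h; exact one_ne_zero (congrFun h x)
      · ext x; rw [hM]; simp [hrow, hn]
    · obtain ⟨x0, -⟩ := hdrg.exists_dist_eq
      refine ⟨fun y => u (G.dist x0 y), ?_, ?_⟩
      · intro h; have := congrFun h x0; simp [hu0] at this
      · ext x; rw [hM, hrow, hUsq, SimpleGraph.dist_comm]; simp; ring
    · obtain ⟨x0, y2, hy2⟩ := aux_ex G D p hdrg 2 hD
      obtain ⟨y1, hadj, -⟩ := aux_step G hdrg.connected x0 y2 1 hy2
      have hy1 := SimpleGraph.dist_eq_one_iff_adj.2 hadj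
      refine ⟨fun y => (if y = x0 then 1 else 0) - 1 / n - u (G.dist x0 y) / μ, ?_, ?_⟩
      · intro h
        have n1 : y1 ≠ x0 := by rintro rfl; simp at hy1
        have n2 : y2 ≠ x0 := by rintro rfl; simp at hy2
        have h1 := congrFun h y1
        have h2 := congrFun h y2
        simp only [n1, n2, if_false, hy1, hy2, Pi.zero_apply] at h1 h2
        have h3 : u 1 / μ = u 2 / μ := by linarith
        rw [div_left_inj' hμ.ne', hu2] at h3
        have : (u 1 - 1) * r = 0 := by linarith
        rcases mul_eq_zero.1 this with h | h
        · linarith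
        · exact hr0 h
      · ext x
        rw [hM]
        simp only [mul_sub, mul_ite, mul_one, mul_zero, Finset.sum_sub_distrib,
          Finset.sum_ite_eq', Finset.mem_univ, if_true, ← mul_div_assoc, ← Finset.sum_div,
          hrow, hUsq]
        simp [← hn]
        field_simp
        simp
end

section
/- Let Γ be a distance-regular graph of diameter D ≥ 3 and valency k, and let θ ≠ k be an eigenvalue of the adjacency matrix of Γ. Then θ is of classical (−1)-type if and only if θ = −k and Γ is bipartite. -/
lemma drg_pred {V : Type*} {G : SimpleGraph V} (hc : G.Connected) {x y : V} {n : ℕ}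
    (h : G.dist x y = n + 1) : ∃ z, G.Adj x z ∧ G.dist z y = n := by
  obtain ⟨w, hw⟩ := hc.exists_walk_length_eq_dist x y
  cases w with
  | nil => simp at h
  | @cons _ z _ hxz w =>
    refine ⟨z, hxz, ?_⟩
    have h1 := SimpleGraph.dist_le w
    have h2 : G.dist x y ≤ G.dist x z + G.dist z y := hc.dist_triangle
    have h3 := SimpleGraph.dist_eq_one_iff_adj.2 hxz
    simp at hw
    omega

lemma drg_adj_dist {V : Type*} {G : SimpleGraph V} (hc : G.Connected) {x z : V} (y : V)
    (h : G.Adj x z) : G.dist x y ≤ G.dist z y + 1 ∧ G.dist z y ≤ G.dist x y + 1 := by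
  have h3 := SimpleGraph.dist_eq_one_iff_adj.2 h
  have h2 : G.dist x y ≤ G.dist x z + G.dist z y := hc.dist_triangle
  have h4 : G.dist z y ≤ G.dist z x + G.dist x y := hc.dist_triangle
  rw [G.dist_comm (u := z) (v := x)] at h4
  omega

lemma drg_exists {V : Type*} [Fintype V] {G : SimpleGraph V} {D : ℕ} {p : ℕ → ℕ → ℕ → ℕ}
    (hd : IsDRG G D p) (i : ℕ) (hi : i ≤ D) : ∃ x y, G.dist x y = i := by
  induction hi using Nat.decreasingInduction with
  | self => exact hd.exists_dist_eq
  | of_succ k hk ih =>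
    obtain ⟨x, y, h⟩ := ih
    obtain ⟨z, -, hz⟩ := drg_pred hd.connected h
    exact ⟨z, y, hz⟩

lemma drg_inter {V : Type*} [Fintype V] {G : SimpleGraph V} {D : ℕ} {p : ℕ → ℕ → ℕ → ℕ}
    (hd : IsDRG G D p) (hD : 3 ≤ D) {i j : ℕ} (hi : i ≤ D) (hj : j ≤ D) {x y : V}
    (h : G.dist x y = i) : {z : V | G.Adj x z ∧ G.dist z y = j}.ncard = p i 1 j := by
  rw [← hd.inter i 1 j hi (by omega) hj x y h]
  congr 1
  ext z
  simp only [Set.mem_setOf_eq]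
  rw [SimpleGraph.dist_eq_one_iff_adj, G.dist_comm (u := y)]

lemma drg_deg {V : Type*} [Fintype V] {G : SimpleGraph V} {D : ℕ} {p : ℕ → ℕ → ℕ → ℕ}
    (hd : IsDRG G D p) (hD : 3 ≤ D) (x : V) : {z : V | G.Adj x z}.ncard = p 0 1 1 := by
  rw [← drg_inter hd hD (Nat.zero_le _) (by omega) (G.dist_self (v := x))]
  congr 1
  ext z
  simp only [Set.mem_setOf_eq, SimpleGraph.dist_eq_one_iff_adj]
  exact ⟨fun h => ⟨h, h.symm⟩, fun h => h.1⟩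

lemma drg_sum {V : Type*} [Fintype V] {G : SimpleGraph V} {D : ℕ} {p : ℕ → ℕ → ℕ → ℕ}
    (hd : IsDRG G D p) (hD : 3 ≤ D) (i : ℕ) (h1 : 1 ≤ i) (h2 : i ≤ D - 1) :
    p i 1 (i - 1) + p i 1 i + p i 1 (i + 1) = p 0 1 1 := by
  obtain ⟨x, y, h⟩ := drg_exists hd i (by omega)
  rw [← drg_deg hd hD x, ← drg_inter hd hD (by omega) (by omega) h,
    ← drg_inter hd hD (by omega) (by omega) h, ← drg_inter hd hD (by omega) (by omega) h,
    ← Set.ncard_union_eq, ← Set.ncard_union_eq]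
  · congr 1
    ext z
    simp only [Set.mem_union, Set.mem_setOf_eq]
    constructor
    · tauto
    · intro hz
      have := drg_adj_dist hd.connected y hz
      have : G.dist z y = i - 1 ∨ G.dist z y = i ∨ G.dist z y = i + 1 := by omega
      tauto
  · rw [Set.disjoint_left]
    simp only [Set.mem_union, Set.mem_setOf_eq]
    intro z; omega
  · rw [Set.disjoint_left]
    simp only [Set.mem_setOf_eq]
    intro z; omega

lemma drg_pos {V : Type*} [Fintype V] {G : SimpleGraph V} {D : ℕ} {p : ℕ → ℕ → ℕ → ℕ}
    (hd : IsDRG G D p) (hD : 3 ≤ D) {i j : ℕ} (hi : i ≤ D) (hj : j ≤ D) {x y z : V}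
    (h : G.dist x y = i) (hz : G.Adj x z) (hzy : G.dist z y = j) : p i 1 j ≠ 0 := by
  rw [← drg_inter hd hD hi hj h]
  intro h0
  rw [Set.ncard_eq_zero] at h0
  have : z ∈ {z : V | G.Adj x z ∧ G.dist z y = j} := ⟨hz, hzy⟩
  rw [h0] at this
  exact this

lemma drg_of_pos {V : Type*} [Fintype V] {G : SimpleGraph V} {D : ℕ} {p : ℕ → ℕ → ℕ → ℕ}
    (hd : IsDRG G D p) (hD : 3 ≤ D) {i j : ℕ} (hi : i ≤ D) (hj : j ≤ D) {x y : V}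
    (h : G.dist x y = i) (hp : p i 1 j ≠ 0) : ∃ z, G.Adj x z ∧ G.dist z y = j := by
  rw [← drg_inter hd hD hi hj h] at hp
  exact Set.nonempty_of_ncard_ne_zero hp

lemma drg_b_pos {V : Type*} [Fintype V] {G : SimpleGraph V} {D : ℕ} {p : ℕ → ℕ → ℕ → ℕ}
    (hd : IsDRG G D p) (hD : 3 ≤ D) (i : ℕ) (hi : i + 1 ≤ D) : p i 1 (i + 1) ≠ 0 := by
  obtain ⟨x, y, h⟩ := drg_exists hd (i + 1) hi
  obtain ⟨z, hz, hzy⟩ := drg_pred hd.connected h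
  exact drg_pos hd hD (by omega) hi hzy hz.symm h

lemma drg_a1 {V : Type*} [Fintype V] {G : SimpleGraph V} {D : ℕ} {p : ℕ → ℕ → ℕ → ℕ}
    (hd : IsDRG G D p) (hD : 3 ≤ D) (h2 : p 2 1 2 = 0) : p 1 1 1 = 0 := by
  by_contra h1
  have hc := hd.connected
  have key : ∀ a b c : V, G.dist a c = 2 → G.dist b c = 2 → ¬ G.Adj a b := fun a b c ha hb hab =>
    drg_pos hd hD (by omega) (by omega) ha hab hb h2
  obtain ⟨w, x, hwx⟩ := drg_exists hd 3 hD
  obtain ⟨y, hwy, hyx⟩ := drg_pred hc hwx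
  obtain ⟨x1, hyx1, hx1x⟩ := drg_pred hc hyx
  obtain ⟨z, hwz, hzy⟩ := drg_of_pos hd hD (by omega) (by omega)
    (SimpleGraph.dist_eq_one_iff_adj.2 hwy) h1
  rw [SimpleGraph.dist_eq_one_iff_adj] at hzy hx1x
  have e1 := drg_adj_dist hc x hwz
  have e2 := drg_adj_dist hc x hzy
  have hz2 : G.dist z x ≠ 2 := fun h => key z y x h hyx hzy
  have hz3 : G.dist z x = 3 := by omega
  have hyx1' := SimpleGraph.dist_eq_one_iff_adj.2 hyx1
  have hx1x' := SimpleGraph.dist_eq_one_iff_adj.2 hx1x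
  have t1 : G.dist z x ≤ G.dist z x1 + G.dist x1 x := hc.dist_triangle
  have t2 : G.dist w x ≤ G.dist w x1 + G.dist x1 x := hc.dist_triangle
  have e3 := drg_adj_dist hc x1 hzy
  have e4 := drg_adj_dist hc x1 hwy
  exact key w z x1 (by omega) (by omega) hwz

lemma drg_parity {V : Type*} {G : SimpleGraph V} (hc : G.Connected) (s : Set V)
    (hs : ∀ x y : V, G.Adj x y → (x ∈ s ↔ y ∉ s)) (n : ℕ) :
    ∀ x y : V, G.dist x y = n → ((x ∈ s ↔ y ∈ s) ↔ Even n) := by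
  induction n with
  | zero =>
    intro x y h
    rw [hc.dist_eq_zero_iff] at h
    simp [h]
  | succ n ih =>
    intro x y h
    obtain ⟨z, hz, hzy⟩ := drg_pred hc h
    have := ih z y hzy
    have := hs x z hz
    rw [Nat.even_add_one]
    tauto

lemma drg_bip {V : Type*} [Fintype V] {G : SimpleGraph V} [DecidableRel G.Adj] {D : ℕ}
    {p : ℕ → ℕ → ℕ → ℕ}
    (hd : IsDRG G D p) (hD : 3 ≤ D) (hθ : IsAdjEigenval G (-(p 0 1 1 : ℝ))) :
    ∃ s : Set V, ∀ x y : V, G.Adj x y → (x ∈ s ↔ y ∉ s) := by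
  obtain ⟨v, hv0, hv⟩ := hθ
  have hc := hd.connected
  have hev : ∀ x, ∑ y ∈ G.neighborFinset x, v y = -(p 0 1 1 : ℝ) * v x := by
    intro x
    have := congrFun hv x
    rw [SimpleGraph.adjMatrix_mulVec_apply] at this
    simpa using this
  have hcard : ∀ x, ((G.neighborFinset x).card : ℝ) = p 0 1 1 := by
    intro x
    rw [← drg_deg hd hD x, ← Set.ncard_coe_finset]
    congr 2
    ext z; simp
  haveI := hc.nonempty
  obtain ⟨x0, hx0⟩ := Finite.exists_max (fun x => |v x|)
  set M := |v x0| with hM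
  have hMpos : 0 < M := by
    obtain ⟨a, ha⟩ := Function.ne_iff.1 hv0
    exact lt_of_lt_of_le (abs_pos.2 ha) (hx0 a)
  have step : ∀ x, |v x| = M → ∀ y, G.Adj x y → v y = - v x := by
    intro x hx y hxy
    have hsum : ∑ y ∈ G.neighborFinset x, (M ^ 2 + v x * v y) = 0 := by
      rw [Finset.sum_add_distrib, ← Finset.mul_sum, hev x, Finset.sum_const, nsmul_eq_mul, hcard,
        ← hx, sq_abs]
      ring
    have hnn : ∀ y ∈ G.neighborFinset x, 0 ≤ M ^ 2 + v x * v y := by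
      intro y _
      have h1 : |v x * v y| ≤ M * M := by
        rw [abs_mul, hx]
        exact mul_le_mul_of_nonneg_left (hx0 y) hMpos.le
      have := neg_abs_le (v x * v y)
      nlinarith
    have := (Finset.sum_eq_zero_iff_of_nonneg hnn).1 hsum y (by simpa using hxy)
    have hx2 : v x ^ 2 = M ^ 2 := by rw [← hx, sq_abs]
    have hne : v x ≠ 0 := by
      intro h; rw [h] at hx; simp at hx; linarith
    have : v x * (v x + v y) = 0 := by nlinarith
    rcases mul_eq_zero.1 this with h | h
    · exact absurd h hne
    · linarith
  have all : ∀ n : ℕ, ∀ x, G.dist x x0 = n → |v x| = M := by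
    intro n
    induction n with
    | zero =>
      intro x h
      rw [hc.dist_eq_zero_iff] at h
      rw [h]
    | succ n ih =>
      intro x h
      obtain ⟨z, hz, hzy⟩ := drg_pred hc h
      rw [step z (ih z hzy) x hz.symm, abs_neg, ih z hzy]
  refine ⟨{x | 0 < v x}, fun x y hxy => ?_⟩
  have hx := all _ x rfl
  have := step x hx y hxy
  have hne : v x ≠ 0 := by
    intro h; rw [h] at hx; simp at hx; linarith
  simp only [Set.mem_setOf_eq, this]
  constructor
  · intro h; linarith
  · intro h
    exact lt_of_le_of_ne (by linarith) hne.symm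

/-- For a distance-regular graph `Γ` of diameter `D ≥ 3` and valency `k`, an eigenvalue
`θ ≠ k` is of classical `(-1)`-type iff `θ = -k` and `Γ` is bipartite. -/
theorem stmt7 {V : Type*} [Fintype V] (G : SimpleGraph V) [DecidableRel G.Adj]
    (D : ℕ) (p : ℕ → ℕ → ℕ → ℕ) (hdrg : IsDRG G D p) (hD : 3 ≤ D)
    (θ : ℝ) (hθ : IsAdjEigenval G θ) (hθk : θ ≠ (p 0 1 1 : ℝ))
    (u : ℕ → ℝ) (hu : IsStdSeq D p θ u) :
    IsClassicalQType D (-1) u ↔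
      (θ = -(p 0 1 1 : ℝ) ∧ ∃ s : Set V, ∀ x y : V, G.Adj x y → (x ∈ s ↔ y ∉ s)) := by
  obtain ⟨hu0, hu1, hrec⟩ := hu
  have hk : (p 0 1 1 : ℝ) ≠ 0 := by exact_mod_cast drg_b_pos hdrg hD 0 (by omega)
  have hsum : ∀ i, 1 ≤ i → i ≤ D - 1 →
      (p i 1 (i - 1) : ℝ) + p i 1 i + p i 1 (i + 1) = p 0 1 1 := by
    intro i h1 h2
    exact_mod_cast drg_sum hdrg hD i h1 h2
  constructor
  · rintro ⟨c, hc⟩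
    have c1 := hc 1 (by omega) (by omega)
    have c2 := hc 2 (by omega) (by omega)
    have c3 := hc 3 (by omega) (by omega)
    have r1 := hrec 1 (by omega) (by omega)
    have r2 := hrec 2 (by omega) (by omega)
    have s1 := hsum 1 (by omega) (by omega)
    have s2 := hsum 2 (by omega) (by omega)
    norm_num at c1 c2 c3 r1 r2 s1 s2
    have hθu : θ = p 0 1 1 * u 1 := by rw [hu1]; field_simp
    have hu1ne : 1 - u 1 ≠ 0 := by
      intro h
      apply hθk
      rw [hθu, show u 1 = 1 by linarith, mul_one]
    have e2 : u 2 = 1 := by linarith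
    have e3 : u 3 = u 1 := by linarith
    rw [hθu, e2, e3] at r2
    rw [hθu, e2, hu0] at r1
    have a2 : (p 2 1 2 : ℝ) * (1 - u 1) = 0 := by
      linear_combination r2 - u 1 * s2
    have a2' : p 2 1 2 = 0 := by
      exact_mod_cast (mul_eq_zero.1 a2).resolve_right hu1ne
    have a1 := drg_a1 hdrg hD a2'
    rw [a1] at r1 s1
    push_cast at r1 s1
    have h3 : ((p 0 1 1 : ℝ) * (1 + u 1)) * (1 - u 1) = 0 := by
      linear_combination r1 - s1
    have h4 := (mul_eq_zero.1 ((mul_eq_zero.1 h3).resolve_right hu1ne)).resolve_left hk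
    have h5 : θ = -(p 0 1 1 : ℝ) := by
      rw [hθu, show u 1 = -1 by linarith]; ring
    refine ⟨h5, ?_⟩
    rw [h5] at hθ
    exact drg_bip hdrg hD hθ
  · rintro ⟨hθ', s, hs⟩
    have ha : ∀ i, 1 ≤ i → i ≤ D - 1 → (p i 1 i : ℝ) = 0 := by
      intro i h1 h2
      by_contra h
      obtain ⟨x, y, hxy⟩ := drg_exists hdrg i (by omega)
      obtain ⟨z, hz, hzy⟩ := drg_of_pos hdrg hD (by omega) (by omega) hxy
        (show p i 1 i ≠ 0 by exact_mod_cast h)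
      have q1 := drg_parity hdrg.connected s hs i x y hxy
      have q2 := drg_parity hdrg.connected s hs i z y hzy
      have q3 := hs x z hz
      tauto
    refine ⟨0, ?_⟩
    intro i h1
    induction i, h1 using Nat.le_induction with
    | base =>
      intro _
      rw [hu1, hθ']
      norm_num [hu0]
      field_simp
    | succ i h1 ih =>
      intro h2
      have ih := ih (by omega)
      have r := hrec i h1 (by omega)
      have q := hsum i h1 (by omega)
      rw [ha i h1 (by omega)] at r q
      have hb : (p i 1 (i + 1) : ℝ) ≠ 0 := by exact_mod_cast drg_b_pos hdrg hD i h2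
      norm_num at ih ⊢
      have : (p i 1 (i + 1) : ℝ) * (u (i + 1) + u i) = 0 := by
        rw [hθ'] at r
        linear_combination r + u i * q - (p i 1 (i - 1) : ℝ) * ih
      have := (mul_eq_zero.1 this).resolve_left hb
      linarith
end

section
/- Let Γ be a distance-regular graph with intersection numbers c_1 = 1 and second largest distinct adjacency eigenvalue θ_1 (the maximum of the adjacency eigenvalues different from the valency k). If Γ contains an induced complete bipartite subgraph K_{r,r} for some integer r ≥ 2 (i.e., there are 2r distinct vertices x_1,…,x_r, y_1,…,y_r such that x_i is adjacent to y_j for all i,j, and no two x_i are adjacent and no two y_j are adjacent), then θ_1 ≤ b_1/(r−1) − 1. -/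
/-- Key counting lemma. -/
theorem drg_sum_s12 {V : Type*} [Fintype V] (G : SimpleGraph V) [DecidableRel G.Adj]
    (D : ℕ) (p : ℕ → ℕ → ℕ → ℕ) (hdrg : IsDRG G D p) (hD : 1 ≤ D) (g : ℕ → ℝ) (x y : V) :
    ∑ z, G.adjMatrix ℝ x z * g (G.dist z y)
      = ∑ j ∈ Finset.range (D + 1), (p (G.dist x y) 1 j : ℝ) * g j := by
  classical
  have h1 : ∀ z, G.adjMatrix ℝ x z * g (G.dist z y) =
      ∑ j ∈ Finset.range (D + 1), (if G.dist x z = 1 ∧ G.dist y z = j then (1:ℝ) else 0) * g j := by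
    intro z
    have hm : G.dist z y ∈ Finset.range (D + 1) := by
      have := hdrg.dist_le z y
      simp; omega
    rw [Finset.sum_eq_single_of_mem _ hm]
    · simp [SimpleGraph.adjMatrix_apply, SimpleGraph.dist_eq_one_iff_adj, SimpleGraph.dist_comm (u := y)]
    · intro j _ hj
      rw [if_neg, zero_mul]
      rintro ⟨_, h⟩
      exact hj (by rw [← h, SimpleGraph.dist_comm])
  rw [Finset.sum_congr rfl (fun z _ => h1 z), Finset.sum_comm]
  refine Finset.sum_congr rfl fun j hj => ?_
  rw [← Finset.sum_mul, Finset.sum_boole]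
  have := hdrg.inter (G.dist x y) 1 j (hdrg.dist_le x y) hD (by simp at hj; omega) x y rfl
  rw [← this, Set.ncard_eq_toFinset_card']
  congr 3
  ext z
  simp

theorem drg_poly {V : Type*} [Fintype V] [DecidableEq V] (G : SimpleGraph V) [DecidableRel G.Adj]
    (D : ℕ) (p : ℕ → ℕ → ℕ → ℕ) (hdrg : IsDRG G D p) (hD : 1 ≤ D) (P : Polynomial ℝ) :
    ∃ g : ℕ → ℝ, ∀ x y, (Polynomial.aeval (G.adjMatrix ℝ) P) x y = g (G.dist x y) := by
  have hpow : ∀ n : ℕ, ∃ g : ℕ → ℝ, ∀ x y, ((G.adjMatrix ℝ) ^ n) x y = g (G.dist x y) := by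
    intro n
    induction n with
    | zero =>
      refine ⟨fun i => if i = 0 then 1 else 0, fun x y => ?_⟩
      simp [Matrix.one_apply, hdrg.connected.dist_eq_zero_iff]
    | succ n ih =>
      obtain ⟨g, hg⟩ := ih
      refine ⟨fun h => ∑ j ∈ Finset.range (D + 1), (p h 1 j : ℝ) * g j, fun x y => ?_⟩
      rw [pow_succ', Matrix.mul_apply]
      refine Eq.trans ?_ (drg_sum_s12 G D p hdrg hD g x y)
      simp only [hg]
  induction P using Polynomial.induction_on' with
  | add P Q hP hQ =>
    obtain ⟨g, hg⟩ := hP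
    obtain ⟨h, hh⟩ := hQ
    exact ⟨fun i => g i + h i, fun x y => by simp [hg, hh]⟩
  | monomial n a =>
    obtain ⟨g, hg⟩ := hpow n
    refine ⟨fun i => a * g i, fun x y => ?_⟩
    rw [Polynomial.aeval_monomial, ← Algebra.smul_def, Matrix.smul_apply, hg]
    rfl

theorem drg_gram {V : Type*} [Fintype V] [DecidableEq V] (G : SimpleGraph V) [DecidableRel G.Adj]
    (D : ℕ) (p : ℕ → ℕ → ℕ → ℕ) (hdrg : IsDRG G D p) (hD : 1 ≤ D) (θ : ℝ)
    (hθ : IsAdjEigenval G θ) :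
    ∃ (F : Matrix V V ℝ) (g : ℕ → ℝ), (∀ x y, ∑ z, F z x * F z y = g (G.dist x y)) ∧
      0 < g 0 ∧ ∀ x y, ∑ z, G.adjMatrix ℝ x z * g (G.dist z y) = θ * g (G.dist x y) := by
  obtain ⟨v, hv0, hv⟩ := hθ
  set A := G.adjMatrix ℝ with hA
  have hint : IsIntegral ℝ A := Matrix.isIntegral A
  have hroot : (minpoly ℝ A).IsRoot θ := by
    rw [← Matrix.minpoly_toLin']
    apply Module.End.isRoot_of_hasEigenvalue
    exact Module.End.hasEigenvalue_of_hasEigenvector (x := v)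
      ⟨Module.End.mem_eigenspace_iff.2 (by simpa using hv), hv0⟩
  obtain ⟨P, hP⟩ := Polynomial.dvd_iff_isRoot.2 hroot
  have hm0 : minpoly ℝ A ≠ 0 := minpoly.ne_zero hint
  have hP0 : P ≠ 0 := by rintro rfl; simp at hP; exact hm0 hP
  set F := Polynomial.aeval A P with hF
  have hF0 : F ≠ 0 := by
    intro h
    have h1 := Polynomial.natDegree_le_natDegree (minpoly.degree_le_of_ne_zero ℝ A hP0 h)
    rw [hP, Polynomial.natDegree_mul (Polynomial.X_sub_C_ne_zero θ) hP0] at h1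
    simp at h1
  have hAF : A * F = θ • F := by
    have h1 := minpoly.aeval ℝ A
    rw [hP, map_mul, map_sub, Polynomial.aeval_X, Polynomial.aeval_C, sub_mul, sub_eq_zero,
      ← Algebra.smul_def] at h1
    exact h1
  obtain ⟨f, hf⟩ := drg_poly G D p hdrg hD P
  obtain ⟨g, hg⟩ := drg_poly G D p hdrg hD (P * P)
  rw [map_mul, ← hA, ← hF] at hg
  have hsym : ∀ x y, F x y = F y x := by
    intro x y
    have h1 : F x y = _ := hf x y
    have h2 : F y x = _ := hf y x
    rw [h1, h2, SimpleGraph.dist_comm]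
  have hM : ∀ x y, ∑ z, F z x * F z y = g (G.dist x y) := by
    intro x y
    rw [← hg, Matrix.mul_apply]
    exact Finset.sum_congr rfl fun z _ => by rw [hsym z x]
  refine ⟨F, g, hM, ?_, ?_⟩
  · obtain ⟨a, b, hab⟩ : ∃ a b, F a b ≠ 0 := by
      by_contra! h
      exact hF0 (by ext a b; simpa using h a b)
    have h1 := hM b b
    rw [SimpleGraph.dist_self] at h1
    rw [← h1]
    exact Finset.sum_pos' (fun z _ => mul_self_nonneg _)
      ⟨a, Finset.mem_univ _, mul_self_pos.2 hab⟩
  · intro x y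
    have h1 : A * (F * F) = θ • (F * F) := by
      rw [← mul_assoc, hAF, smul_mul_assoc]
    have h2 := congrFun (congrFun h1 x) y
    rw [Matrix.mul_apply, Matrix.smul_apply, hg] at h2
    simp only [hg] at h2
    exact h2

/-- Let `Γ` be a distance-regular graph with `c₁ = 1` and second largest distinct
adjacency eigenvalue `θ₁`. If `Γ` contains an induced `K_{r,r}` with `r ≥ 2`, then
`θ₁ ≤ b₁/(r-1) - 1`. -/
theorem stmt12 {V : Type*} [Fintype V] (G : SimpleGraph V) [DecidableRel G.Adj]
    (D : ℕ) (p : ℕ → ℕ → ℕ → ℕ) (hdrg : IsDRG G D p)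
    (hc1 : p 1 1 0 = 1)
    (θ₁ : ℝ) (hθ₁ : IsAdjEigenval G θ₁) (hθ₁k : θ₁ ≠ (p 0 1 1 : ℝ))
    (hθ₁max : ∀ η : ℝ, IsAdjEigenval G η → η ≠ (p 0 1 1 : ℝ) → η ≤ θ₁)
    (r : ℕ) (hr : 2 ≤ r) (x y : Fin r → V)
    (hxinj : Function.Injective x) (hyinj : Function.Injective y)
    (hxy : ∀ i j : Fin r, x i ≠ y j)
    (hadj : ∀ i j : Fin r, G.Adj (x i) (y j))
    (hxnadj : ∀ i j : Fin r, i ≠ j → ¬ G.Adj (x i) (x j))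
    (hynadj : ∀ i j : Fin r, i ≠ j → ¬ G.Adj (y i) (y j)) :
    θ₁ ≤ (p 1 1 2 : ℝ) / ((r : ℝ) - 1) - 1 := by
  classical
  obtain ⟨n, rfl⟩ : ∃ n, r = n + 2 := ⟨r - 2, by omega⟩
  have hdxy : ∀ i j, G.dist (x i) (y j) = 1 := fun i j =>
    SimpleGraph.dist_eq_one_iff_adj.2 (hadj i j)
  have hdyx : ∀ i j, G.dist (y i) (x j) = 1 := fun i j =>
    SimpleGraph.dist_eq_one_iff_adj.2 (hadj j i).symm
  have htwo : ∀ a b c : V, a ≠ b → ¬ G.Adj a b → G.Adj a c → G.Adj c b → G.dist a b = 2 := by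
    intro a b c hab hnab hac hcb
    have h0 : G.dist a b ≠ 0 := fun h => hab (hdrg.connected.dist_eq_zero_iff.1 h)
    have h1 : G.dist a b ≠ 1 := fun h => hnab (SimpleGraph.dist_eq_one_iff_adj.1 h)
    have h2 := hdrg.connected.dist_triangle (u := a) (v := c) (w := b)
    rw [SimpleGraph.dist_eq_one_iff_adj.2 hac, SimpleGraph.dist_eq_one_iff_adj.2 hcb] at h2
    omega
  have hdxx : ∀ i j, G.dist (x i) (x j) = if i = j then 0 else 2 := by
    intro i j
    split_ifs with h
    · simp [h]
    · exact htwo _ _ (y 0) (fun e => h (hxinj e)) (hxnadj i j h) (hadj i 0) (hadj j 0).symm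
  have hdyy : ∀ i j, G.dist (y i) (y j) = if i = j then 0 else 2 := by
    intro i j
    split_ifs with h
    · simp [h]
    · exact htwo _ _ (x 0) (fun e => h (hyinj e)) (hynadj i j h) (hadj 0 i).symm (hadj 0 j)
  have h01 : (0 : Fin (n+2)) ≠ 1 := by simp
  have hD2 : 2 ≤ D := by
    have h1 := hdrg.dist_le (x 0) (x 1)
    rw [hdxx, if_neg h01] at h1
    exact h1
  have hD : 1 ≤ D := by omega
  obtain ⟨F, g, hM, hg0, hAM⟩ := drg_gram G D p hdrg hD θ₁ hθ₁
  -- intersection numbers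
  have hp0 : ∀ j, j ≤ D → j ≠ 1 → p 0 1 j = 0 := by
    intro j hj hj1
    rw [← hdrg.inter 0 1 j (by omega) hD hj (x 0) (x 0) (by simp), Set.ncard_eq_zero]
    ext z
    simp only [Set.mem_setOf_eq, Set.mem_empty_iff_false, iff_false, not_and]
    omega
  have hp1 : ∀ j, j ≤ D → 2 < j → p 1 1 j = 0 := by
    intro j hj hj1
    rw [← hdrg.inter 1 1 j hD hD hj (x 0) (y 0) (hdxy 0 0), Set.ncard_eq_zero]
    ext z
    simp only [Set.mem_setOf_eq, Set.mem_empty_iff_false, iff_false, not_and]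
    intro h1 h2
    have h3 := hdrg.connected.dist_triangle (u := y 0) (v := x 0) (w := z)
    rw [hdyx, h1] at h3
    omega
  have hb : 0 < p 1 1 2 := by
    rw [← hdrg.inter 1 1 2 hD hD hD2 (x 0) (y 0) (hdxy 0 0), Set.ncard_pos]
    exact ⟨y 1, hdxy 0 1, by rw [hdyy, if_neg h01]⟩
  have hk : 0 < p 0 1 1 := by
    rw [← hdrg.inter 0 1 1 (by omega) hD hD (x 0) (x 0) (by simp), Set.ncard_pos]
    exact ⟨y 1, hdxy 0 1, hdxy 0 1⟩
  have hs0 : ∀ f : ℕ → ℝ, ∑ z, G.adjMatrix ℝ (x 0) z * f (G.dist z (x 0)) = p 0 1 1 * f 1 := by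
    intro f
    rw [drg_sum_s12 G D p hdrg hD f, SimpleGraph.dist_self]
    rw [Finset.sum_eq_single_of_mem 1 (by simp; omega)]
    intro j hj hj1
    rw [hp0 j (by simp at hj; omega) hj1]
    simp
  have hs1 : ∀ f : ℕ → ℝ, ∑ z, G.adjMatrix ℝ (x 0) z * f (G.dist z (y 0))
      = f 0 + p 1 1 1 * f 1 + p 1 1 2 * f 2 := by
    intro f
    rw [drg_sum_s12 G D p hdrg hD f, hdxy]
    rw [← Finset.sum_subset (s₁ := Finset.range 3) (by simp; omega)]
    · simp [Finset.sum_range_succ, hc1]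
    · intro j hj hj1
      rw [hp1 j (by simp at hj; omega) (by simp at hj1; omega)]
      simp
  have e0 := hAM (x 0) (x 0)
  rw [hs0, SimpleGraph.dist_self] at e0
  have e1 := hAM (x 0) (y 0)
  rw [hs1, hdxy] at e1
  have e2 := (hs0 (fun _ => 1)).symm.trans (hs1 (fun _ => 1))
  simp only [mul_one] at e2
  have hle : g 1 ≤ g 0 := by
    have h1 : 0 ≤ ∑ z, (F z (x 0) - F z (y 0)) ^ 2 := Finset.sum_nonneg fun z _ => sq_nonneg _
    have h2 : ∑ z, (F z (x 0) - F z (y 0)) ^ 2 = (∑ z, F z (x 0) * F z (x 0)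
        + ∑ z, F z (y 0) * F z (y 0)) - 2 * ∑ z, F z (x 0) * F z (y 0) := by
      rw [← Finset.sum_add_distrib, Finset.mul_sum, ← Finset.sum_sub_distrib]
      exact Finset.sum_congr rfl fun z _ => by ring
    rw [h2, hM, hM, hM, hdxy, SimpleGraph.dist_self, SimpleGraph.dist_self] at h1
    linarith
  have hq : 0 ≤ g 0 + ((n:ℝ) + 1) * g 2 - ((n:ℝ) + 2) * g 1 := by
    have h1 : 0 ≤ ∑ z, (∑ i, (F z (x i) - F z (y i))) * (∑ i, (F z (x i) - F z (y i))) :=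
      Finset.sum_nonneg fun z _ => mul_self_nonneg _
    have h2 : ∑ z, (∑ i, (F z (x i) - F z (y i))) * (∑ i, (F z (x i) - F z (y i)))
        = ∑ i, ∑ j, ((∑ z, F z (x i) * F z (x j) + ∑ z, F z (y i) * F z (y j))
          - (∑ z, F z (x i) * F z (y j) + ∑ z, F z (y i) * F z (x j))) := by
      simp only [Finset.sum_mul_sum, ← Finset.sum_add_distrib, ← Finset.sum_sub_distrib]
      rw [Finset.sum_comm]
      refine Finset.sum_congr rfl fun i _ => ?_
      rw [Finset.sum_comm]
      refine Finset.sum_congr rfl fun j _ => ?_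
      exact Finset.sum_congr rfl fun z _ => by ring
    have h3 : ∀ i j : Fin (n+2), g (if i = j then 0 else 2) =
        g 2 + if i = j then g 0 - g 2 else 0 := by
      intro i j
      split_ifs <;> ring
    rw [h2] at h1
    simp only [hM, hdxx, hdyy, hdxy, hdyx, h3] at h1
    simp [Finset.sum_add_distrib] at h1
    have h4 : (0:ℝ) < (n:ℝ) + 2 := by positivity
    by_contra! hneg
    nlinarith [mul_neg_of_pos_of_neg h4 hneg]
  have hkR : (0:ℝ) < p 0 1 1 := by exact_mod_cast hk
  have hlt : g 1 < g 0 := by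
    refine lt_of_le_of_ne hle fun h => hθ₁k ?_
    rw [h] at e0
    exact (mul_right_cancel₀ hg0.ne' e0).symm
  have hn : (0:ℝ) < (n:ℝ) + 1 := by positivity
  have hbR : (0:ℝ) < p 1 1 2 := by exact_mod_cast hb
  have key : (p 1 1 2 : ℝ) * (g 1 - g 2) = (1 + θ₁) * (g 0 - g 1) := by
    linear_combination (-1) * e1 + e0 - g 1 * e2
  have hfin : (θ₁ + 1) * ((n:ℝ) + 1) ≤ p 1 1 2 := by
    have h5 : ((n:ℝ) + 1) * (g 1 - g 2) ≤ g 0 - g 1 := by linarith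
    have h6 := mul_le_mul_of_nonneg_left h5 hbR.le
    refine le_of_mul_le_mul_right (a := g 0 - g 1) ?_ (by linarith)
    calc _ = ((n:ℝ) + 1) * ((1 + θ₁) * (g 0 - g 1)) := by ring
      _ = (p 1 1 2 : ℝ) * (((n:ℝ) + 1) * (g 1 - g 2)) := by rw [← key]; ring
      _ ≤ _ := h6
  have hcast : (((n + 2 : ℕ) : ℝ) - 1) = (n:ℝ) + 1 := by push_cast; ring
  rw [hcast]
  have := (le_div_iff₀ hn).2 hfin
  linarith
end
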